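/- arXiv:2305.17225 — 5 statements merged into one kernel-verified Lean document; each statement's English description precedes it below -/
import Mathlib

section
/- Let G be a DAG on [d] with a C¹ conditional-density family (p_i) and, for each k ∈ {1,…,K}, a fat-hand intervention with target set τ_k ⊆ [d] replacing the factors p_j (j ∈ τ_k) by intervened C¹ conditional densities p̃^k_j(z_j ∣ z_{pa^k(j)}) with pa^k(j) ⊆ pa(j), giving interventional joint densities p^k; let p^0 be the unintervened joint density. Then for every C¹ diffeomorphism f : ℝ^d → ℝ^d and every h ∈ S_scaling there exist a strictly positive conditional-density family (q_i) for G and intervened conditional densities q̃^k_j (j ∈ τ_k) with the same targets τ_k and the same post-intervention parent sets pa^k(j), with induced interventional joints q^k, such that f_*P^k = (f∘h)_*Q^k for every k ∈ {0,…,K}, where P^k and Q^k are the probability measures on ℝ^d with densities p^k and q^k. -/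
open MeasureTheory

noncomputable section

/-- `f` depends only on the coordinates in `S`. -/
def DependsOnlyOn {d : ℕ} {α : Type*} (f : (Fin d → ℝ) → α) (S : Finset (Fin d)) : Prop :=
  ∀ z w : Fin d → ℝ, (∀ i ∈ S, z i = w i) → f z = f w

/-- `f` is a C¹ diffeomorphism between (real) normed spaces. -/
def IsC1Diffeo {E F : Type*} [NormedAddCommGroup E] [NormedSpace ℝ E]
    [NormedAddCommGroup F] [NormedSpace ℝ F] (f : E → F) : Prop :=
  ContDiff ℝ 1 f ∧ ∃ g : F → E, ContDiff ℝ 1 g ∧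
    Function.LeftInverse g f ∧ Function.RightInverse g f

/-- The measure on `ℝ^d` with density `ρ` with respect to Lebesgue measure. -/
def densityMeasure {d : ℕ} (ρ : (Fin d → ℝ) → ℝ) : Measure (Fin d → ℝ) :=
  volume.withDensity fun z => ENNReal.ofReal (ρ z)

/-- The measure on `ℝ` with density `r` with respect to Lebesgue measure. -/
def densityMeasure₁ (r : ℝ → ℝ) : Measure ℝ :=
  volume.withDensity fun x => ENNReal.ofReal (r x)

/-- Membership in `S_scaling`: the map acts by an elementwise C¹ diffeomorphism of `ℝ`
on each coordinate. -/
def InSScaling {d : ℕ} (h : (Fin d → ℝ) → (Fin d → ℝ)) : Prop :=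
  ∃ hs : Fin d → ℝ → ℝ, (∀ i, IsC1Diffeo (hs i)) ∧ ∀ (z : Fin d → ℝ) (i : Fin d), h z i = hs i (z i)

/-- Membership in `S_reparam`: a coordinate permutation composed with an element of
`S_scaling`. -/
def InSReparam {d : ℕ} (g : (Fin d → ℝ) → (Fin d → ℝ)) : Prop :=
  ∃ (σ : Equiv.Perm (Fin d)) (hs : Fin d → ℝ → ℝ),
    (∀ i, IsC1Diffeo (hs i)) ∧ ∀ (z : Fin d → ℝ) (i : Fin d), g z i = hs (σ i) (z (σ i))

/-- A C¹ conditional-density family for the DAG on `Fin d` with parent map `pa`: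
each `p i` is strictly positive, C¹, depends only on the coordinates `{i} ∪ pa i`,
and integrates to `1` in the `i`-th coordinate. -/
def IsCondFamily {d : ℕ} (pa : Fin d → Finset (Fin d))
    (p : Fin d → (Fin d → ℝ) → ℝ) : Prop :=
  ∀ i, (∀ z, 0 < p i z) ∧ ContDiff ℝ 1 (p i) ∧
    DependsOnlyOn (p i) (insert i (pa i)) ∧
    ∀ z, (∫ t : ℝ, p i (Function.update z i t)) = 1

/-- A strictly positive C¹ probability density on `ℝ`. -/
def IsC1Density (r : ℝ → ℝ) : Prop :=
  (∀ x, 0 < r x) ∧ ContDiff ℝ 1 r ∧ (∫ x : ℝ, r x) = 1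

/-- The joint density `z ↦ ∏ i, p i z` of a conditional-density family. -/
def jointDensity {d : ℕ} (p : Fin d → (Fin d → ℝ) → ℝ) : (Fin d → ℝ) → ℝ :=
  fun z => ∏ i, p i z

/-- `j` is an ancestor of `i` in the DAG with parent map `pa` (transitive closure of the
parent relation). -/
def IsAnc {d : ℕ} (pa : Fin d → Finset (Fin d)) (j i : Fin d) : Prop :=
  Relation.TransGen (fun a b => a ∈ pa b) j i

/-!
The change of variables `z ↦ h z` turns `ρ` into `ρ ∘ h` times the Jacobian determinant of `h`.
As `h` acts coordinatewise, its Jacobian is diagonal and the determinant is, up to sign,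
`∏ i, |deriv hᵢ (z i)|`, with one factor for each node. Absorbing the factor of node `i` into its
mechanism adds no parents and, by one-dimensional substitution, preserves normalization. The factor
depends on the node only, not on its mechanism, so the same absorption serves every intervention.
-/

open Function
open scoped ENNReal

section ChangeOfVariables

theorem injective_of_deriv_ne_zero {g : ℝ → ℝ} (hg : ∀ x, deriv g x ≠ 0) : Injective g := by
  refine .of_lt_imp_ne fun a b hab hgab => ?_
  have hcont : Continuous g :=
    continuous_iff_continuousAt.2 fun x => (differentiableAt_of_deriv_ne_zero (hg x)).continuousAt
  obtain ⟨c, -, hc⟩ := exists_deriv_eq_zero hab hcont.continuousOn hgab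
  exact hg c hc

theorem integral_abs_deriv_smul_comp {F : Type*} [NormedAddCommGroup F] [NormedSpace ℝ F]
    {g g' : ℝ → ℝ} (hg : ∀ x, HasDerivAt g (g' x) x) (hbij : Bijective g) (r : ℝ → F) :
    ∫ x, |g' x| • r (g x) = ∫ y, r y := by
  simpa only [Set.image_univ, hbij.surjective.range_eq, Measure.restrict_univ] using
    (integral_image_eq_integral_abs_deriv_smul .univ (fun x _ => (hg x).hasDerivWithinAt)
      hbij.injective.injOn r).symm

theorem map_withDensity_abs_det_mul_comp {E : Type*} [NormedAddCommGroup E] [NormedSpace ℝ E]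
    [FiniteDimensional ℝ E] [MeasurableSpace E] [BorelSpace E] (μ : Measure E)
    [μ.IsAddHaarMeasure] {h : E → E} {h' : E → E →L[ℝ] E} (hh' : ∀ z, HasFDerivAt h (h' z) z)
    (hbij : Bijective h) (ρ : E → ℝ≥0∞) :
    Measure.map h (μ.withDensity fun z => ENNReal.ofReal |(h' z).det| * ρ (h z)) =
      μ.withDensity ρ := by
  have hmeas : Measurable h :=
    (continuous_iff_continuousAt.2 fun z => (hh' z).continuousAt).measurable
  ext s hs
  rw [Measure.map_apply hmeas hs, withDensity_apply _ (hmeas hs), withDensity_apply _ hs,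
    ← lintegral_image_eq_lintegral_abs_det_fderiv_mul μ (hmeas hs)
      (fun z _ => (hh' z).hasFDerivWithinAt) hbij.injective.injOn,
    Set.image_preimage_eq s hbij.surjective]

end ChangeOfVariables

section CoordinatewiseMaps

theorem hasFDerivAt_piMap {𝕜 ι : Type*} [NontriviallyNormedField 𝕜] [Finite ι]
    {E F : ι → Type*} [∀ i, NormedAddCommGroup (E i)] [∀ i, NormedSpace 𝕜 (E i)]
    [∀ i, NormedAddCommGroup (F i)] [∀ i, NormedSpace 𝕜 (F i)]
    {g : ∀ i, E i → F i} {g' : ∀ i, E i →L[𝕜] F i} {z : ∀ i, E i}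
    (hg : ∀ i, HasFDerivAt (g i) (g' i) (z i)) :
    HasFDerivAt (Pi.map g) (ContinuousLinearMap.piMap g') z :=
  let _ := Fintype.ofFinite ι
  hasFDerivAt_pi.2 fun i => (hg i).comp z (hasFDerivAt_apply i z)

theorem det_piMap_toSpanSingleton {R ι : Type*} [CommRing R] [TopologicalSpace R]
    [ContinuousMul R] [Fintype ι] (a : ι → R) :
    (ContinuousLinearMap.piMap fun i => ContinuousLinearMap.toSpanSingleton R (a i)).det =
      ∏ i, a i :=
  (ContinuousLinearMap.det_pi _).trans <|
    Finset.prod_congr rfl fun i _ => ContinuousLinearMap.det_toSpanSingleton (a i)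

variable {d : ℕ} {g : Fin d → ℝ → ℝ}

theorem map_piMap_densityMeasure (hdiff : ∀ i, Differentiable ℝ (g i))
    (hbij : ∀ i, Bijective (g i)) (ρ : (Fin d → ℝ) → ℝ) :
    Measure.map (Pi.map g)
        (densityMeasure fun z => (∏ i, |deriv (g i) (z i)|) * ρ (Pi.map g z)) =
      densityMeasure ρ := by
  have hderiv (z : Fin d → ℝ) := hasFDerivAt_piMap fun i => (hdiff i (z i)).hasDerivAt.hasFDerivAt
  have hmap := map_withDensity_abs_det_mul_comp volume hderiv (.piMap hbij)
    fun z => ENNReal.ofReal (ρ z)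
  simpa only [densityMeasure, det_piMap_toSpanSingleton, Finset.abs_prod,
    ENNReal.ofReal_mul (Finset.prod_nonneg fun _ _ => abs_nonneg _)] using hmap

end CoordinatewiseMaps

section Mechanisms

variable {d : ℕ} {g : Fin d → ℝ → ℝ}

/-- `r` is a conditional density of coordinate `i` given the coordinates in `S`, encoded as a
function of all coordinates. It is only required to be measurable, since the derivative of a scaling
map need not be continuous. -/
def IsCondDensity (i : Fin d) (S : Finset (Fin d)) (r : (Fin d → ℝ) → ℝ) : Prop :=
  Measurable r ∧ (∀ z, 0 < r z) ∧ DependsOnlyOn r (insert i S) ∧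
    ∀ z, (∫ t : ℝ, r (update z i t)) = 1

/-- The family of conditional densities that `Pi.map g` turns into `p`: the `i`-th one absorbs the
`i`-th diagonal entry of the Jacobian of `Pi.map g`. -/
def scalingPullback (g : Fin d → ℝ → ℝ) (p : Fin d → (Fin d → ℝ) → ℝ) : Fin d → (Fin d → ℝ) → ℝ :=
  fun i z => |deriv (g i) (z i)| * p i (Pi.map g z)

theorem isCondDensity_of_contDiff {n : WithTop ℕ∞} {i : Fin d} {S : Finset (Fin d)}
    {r : (Fin d → ℝ) → ℝ}
    (hr : (∀ z, 0 < r z) ∧ ContDiff ℝ n r ∧ DependsOnlyOn r (insert i S) ∧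
      ∀ z, (∫ t : ℝ, r (update z i t)) = 1) : IsCondDensity i S r :=
  ⟨hr.2.1.continuous.measurable, hr.1, hr.2.2⟩

theorem isCondDensity_scalingPullback {p : Fin d → (Fin d → ℝ) → ℝ} {i : Fin d} {S : Finset (Fin d)}
    (hp : IsCondDensity i S (p i)) (hmap : Measurable (Pi.map g))
    (hderiv : ∀ x, deriv (g i) x ≠ 0) (hsurj : Surjective (g i)) :
    IsCondDensity i S (scalingPullback g p i) := by
  obtain ⟨hp_meas, hp_pos, hp_dep, hp_int⟩ := hp
  refine ⟨?_, fun z => mul_pos (abs_pos.2 (hderiv _)) (hp_pos _), fun z w hzw => ?_, fun z => ?_⟩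
  · exact ((measurable_deriv (g i)).comp (measurable_pi_apply i)).abs.mul (hp_meas.comp hmap)
  · have hpzw : p i (Pi.map g z) = p i (Pi.map g w) :=
      hp_dep _ _ fun j hj => congrArg (g j) (hzw j hj)
    simp only [scalingPullback, hpzw, hzw i (Finset.mem_insert_self i S)]
  · have hg (x : ℝ) : HasDerivAt (g i) (deriv (g i) x) x :=
      (differentiableAt_of_deriv_ne_zero (hderiv x)).hasDerivAt
    calc ∫ t, scalingPullback g p i (update z i t)
        = ∫ t, |deriv (g i) t| • p i (update (Pi.map g z) i (g i t)) := by
          simp only [scalingPullback, update_self, Pi.map_update, smul_eq_mul]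
      _ = ∫ x, p i (update (Pi.map g z) i x) :=
          integral_abs_deriv_smul_comp hg ⟨injective_of_deriv_ne_zero hderiv, hsurj⟩
            fun x => p i (update (Pi.map g z) i x)
      _ = 1 := hp_int _

theorem jointDensity_scalingPullback (p : Fin d → (Fin d → ℝ) → ℝ) :
    jointDensity (scalingPullback g p) =
      fun z => (∏ i, |deriv (g i) (z i)|) * jointDensity p (Pi.map g z) :=
  funext fun _ => Finset.prod_mul_distrib

theorem map_piMap_jointDensity_scalingPullback (hdiff : ∀ i, Differentiable ℝ (g i))
    (hbij : ∀ i, Bijective (g i)) (p : Fin d → (Fin d → ℝ) → ℝ) :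
    Measure.map (Pi.map g) (densityMeasure (jointDensity (scalingPullback g p))) =
      densityMeasure (jointDensity p) := by
  rw [jointDensity_scalingPullback, map_piMap_densityMeasure hdiff hbij]

theorem scalingPullback_piecewise (τ : Finset (Fin d)) (pt p : Fin d → (Fin d → ℝ) → ℝ) :
    scalingPullback g (τ.piecewise pt p) =
      τ.piecewise (scalingPullback g pt) (scalingPullback g p) := by
  ext i z
  by_cases hi : i ∈ τ <;> simp [scalingPullback, hi]

theorem jointDensity_piecewise (τ : Finset (Fin d)) (pt p : Fin d → (Fin d → ℝ) → ℝ) :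
    jointDensity (τ.piecewise pt p) = fun z => (∏ j ∈ τ, pt j z) * ∏ i ∈ τᶜ, p i z := by
  ext z
  rw [jointDensity, ← Finset.prod_mul_prod_compl τ]
  congr 1
  · exact Finset.prod_congr rfl fun j hj => by rw [Finset.piecewise_eq_of_mem _ _ _ hj]
  · exact Finset.prod_congr rfl fun i hi => by
      rw [Finset.piecewise_eq_of_notMem _ _ _ (Finset.mem_compl.1 hi)]

end Mechanisms

theorem IsC1Diffeo.surjective {E F : Type*} [NormedAddCommGroup E] [NormedSpace ℝ E]
    [NormedAddCommGroup F] [NormedSpace ℝ F] {f : E → F} (hf : IsC1Diffeo f) : Surjective f :=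
  let ⟨_, _, _, _, hright⟩ := hf
  hright.surjective

theorem IsC1Diffeo.deriv_ne_zero {g : ℝ → ℝ} (hg : IsC1Diffeo g) (x : ℝ) : deriv g x ≠ 0 := by
  obtain ⟨hg, k, hk, hleft, -⟩ := hg
  have hkg : HasDerivAt (k ∘ g) (deriv k (g x) * deriv g x) x :=
    (hk.differentiable one_ne_zero _).hasDerivAt.comp x (hg.differentiable one_ne_zero x).hasDerivAt
  rw [hleft.comp_eq_id] at hkg
  exact right_ne_zero_of_mul_eq_one (hkg.unique (hasDerivAt_id x))

theorem InSScaling.exists_eq_piMap {d : ℕ} {h : (Fin d → ℝ) → (Fin d → ℝ)} (hh : InSScaling h) :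
    ∃ g : Fin d → ℝ → ℝ, (∀ i, IsC1Diffeo (g i)) ∧ h = Pi.map g :=
  let ⟨g, hg, hhg⟩ := hh
  ⟨g, hg, funext fun z => funext (hhg z)⟩

theorem scaling_ambiguity_unavoidable_general {d : ℕ} {κ α : Type*} [MeasurableSpace α]
    (pa : Fin d → Finset (Fin d)) (p : Fin d → (Fin d → ℝ) → ℝ)
    (hp : ∀ i, IsCondDensity i (pa i) (p i))
    (τ : κ → Finset (Fin d)) (pak : κ → Fin d → Finset (Fin d))
    (pt : κ → Fin d → (Fin d → ℝ) → ℝ)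
    (hpt : ∀ k, ∀ j ∈ τ k, IsCondDensity j (pak k j) (pt k j))
    (f : (Fin d → ℝ) → α) (hf : Measurable f)
    (g : Fin d → ℝ → ℝ) (hderiv : ∀ i x, deriv (g i) x ≠ 0) (hsurj : ∀ i, Surjective (g i)) :
    ∃ (q : Fin d → (Fin d → ℝ) → ℝ) (qt : κ → Fin d → (Fin d → ℝ) → ℝ),
      (∀ i, IsCondDensity i (pa i) (q i)) ∧
      (∀ k, ∀ j ∈ τ k, IsCondDensity j (pak k j) (qt k j)) ∧
      Measure.map f (densityMeasure (jointDensity p)) =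
        Measure.map (f ∘ Pi.map g) (densityMeasure (jointDensity q)) ∧
      ∀ k,
        Measure.map f (densityMeasure fun z =>
            (∏ j ∈ τ k, pt k j z) * ∏ i ∈ (τ k)ᶜ, p i z) =
        Measure.map (f ∘ Pi.map g) (densityMeasure fun z =>
            (∏ j ∈ τ k, qt k j z) * ∏ i ∈ (τ k)ᶜ, q i z) := by
  have hdiff (i : Fin d) : Differentiable ℝ (g i) :=
    fun x => differentiableAt_of_deriv_ne_zero (hderiv i x)
  have hmap : Measurable (Pi.map g) :=
    measurable_pi_iff.2 fun i => (hdiff i).continuous.measurable.comp (measurable_pi_apply i)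
  have hbij (i : Fin d) : Bijective (g i) := ⟨injective_of_deriv_ne_zero (hderiv i), hsurj i⟩
  refine ⟨scalingPullback g p, fun k => scalingPullback g (pt k),
    fun i => isCondDensity_scalingPullback (hp i) hmap (hderiv i) (hsurj i),
    fun k j hj => isCondDensity_scalingPullback (hpt k j hj) hmap (hderiv j) (hsurj j),
    ?_, fun k => ?_⟩
  · rw [← Measure.map_map hf hmap, map_piMap_jointDensity_scalingPullback hdiff hbij]
  · rw [← Measure.map_map hf hmap, ← jointDensity_piecewise, ← jointDensity_piecewise,
      ← scalingPullback_piecewise, map_piMap_jointDensity_scalingPullback hdiff hbij]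

/-- **Lemma 1 (unavoidable scaling ambiguity).** Given a latent CBN over the DAG with parent
map `pa` (topologically ordered), with conditional-density family `p`, and fat-hand
interventions with targets `τ k`, post-intervention parent sets `pak k j ⊆ pa j` and
intervened conditional densities `pt k j` (for `j ∈ τ k`), then for every C¹ diffeomorphism
`f` and every `h ∈ S_scaling` there exist a strictly positive conditional-density family `q`
for the same DAG and intervened conditional densities `qt k j` with the same targets and the
same post-intervention parent sets, such that `f⁎P^k = (f ∘ h)⁎Q^k` in the unintervened
regime and in every interventional regime `k`. -/
theorem scaling_ambiguity_unavoidable {d K : ℕ} (pa : Fin d → Finset (Fin d))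
    (hpa : ∀ i : Fin d, ∀ j ∈ pa i, j < i)
    (p : Fin d → (Fin d → ℝ) → ℝ) (hp : IsCondFamily pa p)
    (τ : Fin K → Finset (Fin d))
    (pak : Fin K → Fin d → Finset (Fin d))
    (hpak : ∀ (k : Fin K) (j : Fin d), pak k j ⊆ pa j)
    (pt : Fin K → Fin d → (Fin d → ℝ) → ℝ)
    (hpt : ∀ k : Fin K, ∀ j ∈ τ k, (∀ z, 0 < pt k j z) ∧ ContDiff ℝ 1 (pt k j) ∧
        DependsOnlyOn (pt k j) (insert j (pak k j)) ∧
        ∀ z, (∫ t : ℝ, pt k j (Function.update z j t)) = 1)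
    (f : (Fin d → ℝ) → (Fin d → ℝ)) (hf : IsC1Diffeo f)
    (h : (Fin d → ℝ) → (Fin d → ℝ)) (hh : InSScaling h) :
    ∃ (q : Fin d → (Fin d → ℝ) → ℝ) (qt : Fin K → Fin d → (Fin d → ℝ) → ℝ),
      (∀ i : Fin d, (∀ z, 0 < q i z) ∧ DependsOnlyOn (q i) (insert i (pa i)) ∧
          ∀ z, (∫ t : ℝ, q i (Function.update z i t)) = 1) ∧
      (∀ k : Fin K, ∀ j ∈ τ k, (∀ z, 0 < qt k j z) ∧
          DependsOnlyOn (qt k j) (insert j (pak k j)) ∧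
          ∀ z, (∫ t : ℝ, qt k j (Function.update z j t)) = 1) ∧
      Measure.map f (densityMeasure (jointDensity p)) =
        Measure.map (f ∘ h) (densityMeasure (jointDensity q)) ∧
      ∀ k : Fin K,
        Measure.map f (densityMeasure fun z =>
            (∏ j ∈ τ k, pt k j z) * ∏ i ∈ (τ k)ᶜ, p i z) =
        Measure.map (f ∘ h) (densityMeasure fun z =>
            (∏ j ∈ τ k, qt k j z) * ∏ i ∈ (τ k)ᶜ, q i z) := by
  obtain ⟨g, hg, rfl⟩ := hh.exists_eq_piMap
  obtain ⟨q, qt, hq, hqt, hmaps⟩ := scaling_ambiguity_unavoidable_general pa p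
    (fun i => isCondDensity_of_contDiff (hp i)) τ pak pt
    (fun k j hj => isCondDensity_of_contDiff (hpt k j hj)) f hf.1.continuous.measurable g
    (fun i => (hg i).deriv_ne_zero) (fun i => (hg i).surjective)
  exact ⟨q, qt, fun i => (hq i).2, fun k j hj => (hqt k j hj).2, hmaps⟩
end
end

section
/- Let P_A and P_C be probability measures on ℝ with differentiable, strictly positive densities with respect to Lebesgue measure. Let f : ℝ × ℝ^d → ℝ be differentiable, and suppose that for every b ∈ ℝ^d the map a ↦ f(a, b) pushes P_A forward to P_C, i.e., Measure.map (f(·, b)) P_A = P_C. Then f is constant in its second argument: f(a, b) = f(a, b′) for all a ∈ ℝ and all b, b′ ∈ ℝ^d. -/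
open MeasureTheory

noncomputable section

/-!
Suppose `g` transports a measure with positive lower density everywhere to one with finite upper
density everywhere. Where `g' = 0`, small balls would be squeezed into much smaller ones, creating
infinite density; hence `g'` never vanishes and, by Darboux, `g` is strictly monotone or strictly
antitone. Monotonicity and antitonicity pass to pointwise limits, so along a connected family of
such maps only one of them occurs. Finally, a continuous monotone transport of a finite measure `μ`
to `ν` is unique, because `g a` has to be the `μ (Iic a)`-quantile of `ν`.
-/

open Filter Metric Set
open scoped ENNReal NNReal Topology

section Density

variable {X : Type*} [PseudoMetricSpace X] [MeasurableSpace X] {μ ν : Measure X} {x : X}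

/-- The lower density of `μ` with respect to `ν` at `x`: the lower limit, as `r` tends to `0`, of
the ratio of the masses that `μ` and `ν` give to the closed ball of radius `r` around `x`. -/
def lowerDensity (μ ν : Measure X) (x : X) : ℝ≥0∞ :=
  liminf (fun r => μ (closedBall x r) / ν (closedBall x r)) (𝓝[>] 0)

/-- The upper density of `μ` with respect to `ν` at `x`: the upper limit, as `r` tends to `0`, of
the ratio of the masses that `μ` and `ν` give to the closed ball of radius `r` around `x`. -/
def upperDensity (μ ν : Measure X) (x : X) : ℝ≥0∞ :=
  limsup (fun r => μ (closedBall x r) / ν (closedBall x r)) (𝓝[>] 0)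

theorem isOpenPosMeasure_of_lowerDensity_pos (h : ∀ x, 0 < lowerDensity μ ν x) :
    μ.IsOpenPosMeasure where
  open_pos U hU := by
    rintro ⟨x, hx⟩ hμU
    have hratio : ∀ᶠ r in 𝓝[>] 0, 0 < μ (closedBall x r) / ν (closedBall x r) :=
      eventually_lt_of_lt_liminf (h x)
    have hball : ∀ᶠ r in 𝓝[>] 0, closedBall x r ⊆ U :=
      (eventually_closedBall_subset (hU.mem_nhds hx)).filter_mono nhdsWithin_le_nhds
    obtain ⟨r, hr, hrU⟩ := (hratio.and hball).exists
    exact (ENNReal.div_pos_iff.mp hr).1 (measure_mono_null hrU hμU)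

theorem le_lowerDensity_withDensity [OpensMeasurableSpace X] [IsLocallyFiniteMeasure ν]
    [ν.IsOpenPosMeasure] {q : X → ℝ≥0∞} (hq : LowerSemicontinuousAt q x) :
    q x ≤ lowerDensity (ν.withDensity q) ν x := by
  refine le_of_forall_lt_imp_le_of_dense fun m hm => le_liminf_of_le (h := ?_)
  have hball : ∀ᶠ r in 𝓝[>] 0, closedBall x r ⊆ {y | m < q y} :=
    (eventually_closedBall_subset (hq m hm)).filter_mono nhdsWithin_le_nhds
  have hfinite : ∀ᶠ r in 𝓝[>] 0, ν (closedBall x r) < ∞ :=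
    ((tendsto_closedBall_smallSets x).eventually (ν.finiteAt_nhds x).eventually).filter_mono
      nhdsWithin_le_nhds
  filter_upwards [hball, hfinite, self_mem_nhdsWithin] with r hr hfin hpos
  have hne : ν (closedBall x r) ≠ 0 := (measure_closedBall_pos ν x hpos).ne'
  refine (ENNReal.le_div_iff_mul_le (.inl hne) (.inl hfin.ne)).mpr ?_
  calc m * ν (closedBall x r) = ∫⁻ _ in closedBall x r, m ∂ν := (setLIntegral_const _ _).symm
    _ ≤ ∫⁻ y in closedBall x r, q y ∂ν :=
        setLIntegral_mono' measurableSet_closedBall fun y hy => (hr hy).le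
    _ = ν.withDensity q (closedBall x r) := (withDensity_apply _ measurableSet_closedBall).symm

theorem upperDensity_withDensity_le [OpensMeasurableSpace X] {q : X → ℝ≥0∞}
    (hq : UpperSemicontinuousAt q x) : upperDensity (ν.withDensity q) ν x ≤ q x := by
  refine le_of_forall_gt_imp_ge_of_dense fun M hM => limsup_le_of_le (h := ?_)
  have hball : ∀ᶠ r in 𝓝[>] 0, closedBall x r ⊆ {y | q y < M} :=
    (eventually_closedBall_subset (hq M hM)).filter_mono nhdsWithin_le_nhds
  filter_upwards [hball] with r hr
  refine ENNReal.div_le_of_le_mul ?_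
  calc ν.withDensity q (closedBall x r)
      = ∫⁻ y in closedBall x r, q y ∂ν := withDensity_apply _ measurableSet_closedBall
    _ ≤ ∫⁻ _ in closedBall x r, M ∂ν :=
        setLIntegral_mono' measurableSet_closedBall fun y hy => (hr hy).le
    _ = M * ν (closedBall x r) := setLIntegral_const _ _

theorem lowerDensity_withDensity_ofReal_pos [OpensMeasurableSpace X] [IsLocallyFiniteMeasure ν]
    [ν.IsOpenPosMeasure] {p : X → ℝ} (hp : ContinuousAt p x) (hpos : 0 < p x) :
    0 < lowerDensity (ν.withDensity fun y => ENNReal.ofReal (p y)) ν x := by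
  have hq : ContinuousAt (fun y => ENNReal.ofReal (p y)) x :=
    ENNReal.continuous_ofReal.continuousAt.comp hp
  have hle := le_lowerDensity_withDensity (ν := ν) hq.lowerSemicontinuousAt
  exact lt_of_lt_of_le (ENNReal.ofReal_pos.mpr hpos) hle

theorem upperDensity_withDensity_ofReal_ne_top [OpensMeasurableSpace X] {p : X → ℝ}
    (hp : ContinuousAt p x) :
    upperDensity (ν.withDensity fun y => ENNReal.ofReal (p y)) ν x ≠ ∞ := by
  have hq : ContinuousAt (fun y => ENNReal.ofReal (p y)) x :=
    ENNReal.continuous_ofReal.continuousAt.comp hp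
  exact ne_top_of_le_ne_top ENNReal.ofReal_ne_top
    (upperDensity_withDensity_le hq.upperSemicontinuousAt)

end Density

section Differentiation

variable {E : Type*} [NormedAddCommGroup E] [NormedSpace ℝ E] [FiniteDimensional ℝ E]
  [MeasurableSpace E] [BorelSpace E] {μ ν : Measure E} [ν.IsAddHaarMeasure] {g : E → E} {a : E}

theorem lowerDensity_le_mul_upperDensity_map (hg : AEMeasurable g μ) {K : ℝ} (hK : 0 < K)
    (hlip : ∀ᶠ x in 𝓝 a, dist (g x) (g a) ≤ K * dist x a) :
    lowerDensity μ ν a ≤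
      ENNReal.ofReal (K ^ Module.finrank ℝ E) * upperDensity (μ.map g) ν (g a) := by
  set C := ENNReal.ofReal (K ^ Module.finrank ℝ E)
  have hC : C ≠ 0 := by positivity
  have hC' : C ≠ ∞ := ENNReal.ofReal_ne_top
  let ratio : ℝ → ℝ≥0∞ := fun r => μ.map g (closedBall (g a) r) / ν (closedBall (g a) r)
  have hscale : Tendsto (K * ·) (𝓝[>] 0) (𝓝[>] 0) := by
    refine tendsto_nhdsWithin_iff.mpr ⟨?_, ?_⟩
    · exact ((continuous_const_mul K).tendsto' 0 0 (mul_zero K)).mono_left nhdsWithin_le_nhds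
    · filter_upwards [self_mem_nhdsWithin] with r hr using mul_pos hK hr
  have hvol (r : ℝ) : ν (closedBall (g a) (K * r)) = C * ν (closedBall a r) := by
    rw [Measure.addHaar_closedBall_mul_of_pos ν _ hK, Measure.addHaar_closedBall_center ν a]
  have hball : ∀ᶠ r in 𝓝[>] 0, closedBall a r ⊆ {x | dist (g x) (g a) ≤ K * dist x a} :=
    (eventually_closedBall_subset hlip).filter_mono nhdsWithin_le_nhds
  have hratio : ∀ᶠ r in 𝓝[>] 0, μ (closedBall a r) / ν (closedBall a r) ≤ C * ratio (K * r) := by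
    filter_upwards [hball] with r hr
    have hsub : closedBall a r ⊆ g ⁻¹' closedBall (g a) (K * r) := fun x hx =>
      (hr hx).trans (mul_le_mul_of_nonneg_left hx hK.le)
    calc μ (closedBall a r) / ν (closedBall a r)
        ≤ μ.map g (closedBall (g a) (K * r)) / ν (closedBall a r) :=
          ENNReal.div_le_div_right ((measure_mono hsub).trans (Measure.le_map_apply hg _)) _
      _ = C * ratio (K * r) := by
          simp only [ratio]
          rw [hvol, ← mul_div_assoc, ENNReal.mul_div_mul_left _ _ hC hC']
  calc lowerDensity μ ν a
      ≤ limsup (fun r => μ (closedBall a r) / ν (closedBall a r)) (𝓝[>] 0) := liminf_le_limsup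
    _ ≤ limsup (fun r => C * ratio (K * r)) (𝓝[>] 0) := limsup_le_limsup hratio
    _ = C * limsup (ratio ∘ (K * ·)) (𝓝[>] 0) := ENNReal.limsup_const_mul_of_ne_top hC'
    _ ≤ C * upperDensity (μ.map g) ν (g a) := by
        gcongr
        exact limsup_le_limsup_of_le hscale

end Differentiation

theorem deriv_ne_zero_of_lowerDensity_pos {μ : Measure ℝ} {g : ℝ → ℝ} {a : ℝ}
    (hg : AEMeasurable g μ) (hdiff : DifferentiableAt ℝ g a)
    (hμ : 0 < lowerDensity μ volume a) (hν : upperDensity (μ.map g) volume (g a) ≠ ∞) :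
    deriv g a ≠ 0 := by
  intro hzero
  obtain ⟨K, hK, hlt⟩ := ENNReal.exists_nnreal_pos_mul_lt hν hμ.ne'
  have hderiv : HasDerivAt g 0 a := hzero ▸ hdiff.hasDerivAt
  have hlip : ∀ᶠ x in 𝓝 a, dist (g x) (g a) ≤ K * dist x a := by
    simpa [dist_eq_norm] using (hasDerivAt_iff_isLittleO.mp hderiv).def (NNReal.coe_pos.mpr hK)
  have hle := lowerDensity_le_mul_upperDensity_map (ν := volume) hg (NNReal.coe_pos.mpr hK) hlip
  rw [Module.finrank_self, pow_one, ENNReal.ofReal_coe_nnreal] at hle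
  exact hlt.not_ge hle

theorem strictMono_or_strictAnti_of_deriv_ne_zero {g : ℝ → ℝ} (hg : Differentiable ℝ g)
    (hne : ∀ x, deriv g x ≠ 0) : StrictMono g ∨ StrictAnti g := by
  rcases hasDerivWithinAt_forall_lt_or_forall_gt_of_forall_ne convex_univ
    (fun x _ => (hg x).hasDerivAt.hasDerivWithinAt) (fun x _ => hne x) with hneg | hpos
  · exact .inr (strictAnti_of_deriv_neg fun x => hneg x (mem_univ x))
  · exact .inl (strictMono_of_deriv_pos fun x => hpos x (mem_univ x))

theorem forall_strictMono_or_forall_strictAnti {B α β : Type*} [TopologicalSpace B]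
    [PreconnectedSpace B] [PartialOrder α] [Preorder β] [TopologicalSpace β]
    [OrderClosedTopology β] {F : B → α → β} (hF : Continuous F)
    (h : ∀ b, StrictMono (F b) ∨ StrictAnti (F b)) :
    (∀ b, StrictMono (F b)) ∨ ∀ b, StrictAnti (F b) := by
  by_contra! ⟨⟨b, hb⟩, b', hb'⟩
  have hcover : univ ⊆ {c | Monotone (F c)} ∪ {c | Antitone (F c)} :=
    fun c _ => (h c).imp StrictMono.monotone StrictAnti.antitone
  obtain ⟨c, -, hmono, hanti⟩ :=
    isPreconnected_closed_iff.mp isPreconnected_univ _ _ (isClosed_monotone.preimage hF)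
      (isClosed_antitone.preimage hF) hcover ⟨b', mem_univ _, ((h b').resolve_right hb').monotone⟩
      ⟨b, mem_univ _, ((h b).resolve_left hb).antitone⟩
  refine hb fun x y hxy => ?_
  rcases h c with hc | hc
  · exact absurd (hanti hxy.le) (hc hxy).not_ge
  · exact absurd (hmono hxy.le) (hc hxy).not_ge

section Transport

variable {α β : Type*} [LinearOrder α] [TopologicalSpace α] [OrderTopology α] [DenselyOrdered α]
  [MeasurableSpace α] [OpensMeasurableSpace α] [LinearOrder β] [TopologicalSpace β]
  [OrderClosedTopology β] [MeasurableSpace β] [BorelSpace β]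
  {μ : Measure α} [IsFiniteMeasure μ] [μ.IsOpenPosMeasure] {g h : α → β}

theorem strictMono_measure_Iic : StrictMono fun x => μ (Iic x) := by
  intro x y hxy
  have hpos : 0 < μ (Ioo x y) := (Measure.measure_Ioo_pos μ).mpr hxy
  calc μ (Iic x) < μ (Iic x) + μ (Ioo x y) := ENNReal.lt_add_right (measure_ne_top _ _) hpos.ne'
    _ ≤ μ (Iic x) + μ (Ioc x y) := by gcongr; exact Ioo_subset_Ioc_self
    _ = μ (Iic y) := by
      rw [← measure_union (Iic_disjoint_Ioc le_rfl) measurableSet_Ioc, Iic_union_Ioc_eq_Iic hxy.le]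

variable [NoMinOrder α]

theorem le_of_monotone_of_map_eq (hg : Monotone g) (hh : Monotone h) (hgm : Measurable g)
    (hhc : Continuous h) (hmap : μ.map g = μ.map h) : h ≤ g := by
  intro a
  by_contra! hlt
  obtain ⟨l, hla, hl⟩ := exists_Ioc_subset_of_mem_nhds
    (hhc.continuousAt.eventually_const_lt hlt) (exists_lt a)
  have hsub : h ⁻¹' Iic (g a) ⊆ Iic l := by
    intro x hx
    have hxa : x < a := hh.reflect_lt (lt_of_le_of_lt hx hlt)
    exact not_lt.mp fun hlx => (hl ⟨hlx, hxa.le⟩).not_ge hx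
  refine (strictMono_measure_Iic (μ := μ) hla).not_ge ?_
  calc μ (Iic a) ≤ μ (g ⁻¹' Iic (g a)) := measure_mono fun x hx => hg hx
    _ = μ (h ⁻¹' Iic (g a)) := by
      rw [← Measure.map_apply hgm measurableSet_Iic, hmap,
        Measure.map_apply hhc.measurable measurableSet_Iic]
    _ ≤ μ (Iic l) := measure_mono hsub

theorem eq_of_monotone_of_map_eq (hg : Monotone g) (hh : Monotone h) (hgc : Continuous g)
    (hhc : Continuous h) (hmap : μ.map g = μ.map h) : g = h :=
  le_antisymm (le_of_monotone_of_map_eq hh hg hhc.measurable hgc hmap.symm)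
    (le_of_monotone_of_map_eq hg hh hgc.measurable hhc hmap)

theorem eq_of_antitone_of_map_eq (hg : Antitone g) (hh : Antitone h) (hgc : Continuous g)
    (hhc : Continuous h) (hmap : μ.map g = μ.map h) : g = h :=
  eq_of_monotone_of_map_eq (β := βᵒᵈ) hg.dual_right hh.dual_right hgc hhc hmap

end Transport

theorem measure_preserving_const_in_second_arg_general {B : Type*} [TopologicalSpace B]
    [PreconnectedSpace B] {μ ν : Measure ℝ} [IsFiniteMeasure μ]
    (hμ : ∀ a, 0 < lowerDensity μ volume a) (hν : ∀ c, upperDensity ν volume c ≠ ∞)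
    (f : ℝ × B → ℝ) (hf : ∀ b, Differentiable ℝ fun a => f (a, b))
    (hfc : ∀ a, Continuous fun b => f (a, b))
    (hpush : ∀ b, μ.map (fun a => f (a, b)) = ν) (a : ℝ) (b b' : B) : f (a, b) = f (a, b') := by
  have : μ.IsOpenPosMeasure := isOpenPosMeasure_of_lowerDensity_pos hμ
  have hstrict (b : B) : StrictMono (fun a => f (a, b)) ∨ StrictAnti fun a => f (a, b) := by
    refine strictMono_or_strictAnti_of_deriv_ne_zero (hf b) fun x => ?_
    refine deriv_ne_zero_of_lowerDensity_pos (hf b).continuous.aemeasurable (hf b x) (hμ x) ?_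
    exact (hpush b).symm ▸ hν _
  have hmap : μ.map (fun a => f (a, b)) = μ.map fun a => f (a, b') :=
    (hpush b).trans (hpush b').symm
  have hb := (hf b).continuous
  have hb' := (hf b').continuous
  suffices (fun a => f (a, b)) = fun a => f (a, b') from congrFun this a
  rcases forall_strictMono_or_forall_strictAnti (continuous_pi hfc) hstrict with hmono | hanti
  · exact eq_of_monotone_of_map_eq (hmono b).monotone (hmono b').monotone hb hb' hmap
  · exact eq_of_antitone_of_map_eq (hanti b).antitone (hanti b').antitone hb hb' hmap

/-- **Lemma (Brehmer et al., Lemma 2).** If `P_A` and `P_C` are probability measures on `ℝ`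
with differentiable strictly positive densities, `f : ℝ × ℝ^d → ℝ` is differentiable, and for
every `b` the map `a ↦ f (a, b)` pushes `P_A` forward to `P_C`, then `f` is constant in its
second argument. -/
theorem measure_preserving_const_in_second_arg {d : ℕ} (pA pC : ℝ → ℝ)
    (hpA_diff : Differentiable ℝ pA) (hpA_pos : ∀ x, 0 < pA x)
    (hpA_int : (∫ x : ℝ, pA x) = 1)
    (hpC_diff : Differentiable ℝ pC) (hpC_pos : ∀ x, 0 < pC x)
    (hpC_int : (∫ x : ℝ, pC x) = 1)
    (f : ℝ × (Fin d → ℝ) → ℝ) (hf : Differentiable ℝ f)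
    (hpush : ∀ b : Fin d → ℝ,
      Measure.map (fun a => f (a, b))
          (volume.withDensity fun x => ENNReal.ofReal (pA x)) =
        volume.withDensity fun x => ENNReal.ofReal (pC x)) :
    ∀ (a : ℝ) (b b' : Fin d → ℝ), f (a, b) = f (a, b') := by
  have hA : IsFiniteMeasure (volume.withDensity fun x => ENNReal.ofReal (pA x)) :=
    isFiniteMeasure_withDensity_ofReal (integrable_of_integral_eq_one hpA_int).2
  exact measure_preserving_const_in_second_arg_general
    (fun a => lowerDensity_withDensity_ofReal_pos (hpA_diff a).continuousAt (hpA_pos a))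
    (fun c => upperDensity_withDensity_ofReal_ne_top (hpC_diff c).continuousAt)
    f (by fun_prop) (fun a => hf.continuous.comp (by fun_prop)) hpush
end
end

section
/- Let G be a DAG on [d]. Let (p_i) and (q_i) be C¹ conditional-density families for G, and for each k ∈ [d] let p̃_k and q̃_k be intervened C¹ conditional densities on node k with a common post-intervention parent set pa^k(k) ⊆ pa(k), giving interventional joint densities p^k and q^k; let p^0, q^0 be the unintervened joint densities. Assume the interventional discrepancy holds for every node k ∈ [d] in both families. Let f, f′ : ℝ^d → ℝ^d be C¹ diffeomorphisms such that f_*P^k = f′_*Q^k for every k ∈ {0,1,…,d}, where P^k, Q^k are the measures with densities p^k, q^k. Then φ := f′⁻¹ ∘ f satisfies ∂φ_i/∂z_j(z) = 0 for every z ∈ ℝ^d, every i ∈ [d], and every j ∉ anc̄(i); that is, each component φ_i is a function of the coordinates z_{anc̄(i)} only. -/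
open MeasureTheory

noncomputable section

/-!
Put `φ = f'⁻¹ ∘ f`, which transports `P^k` to `Q^k` for every `k`. Dividing the transport identity
of the observational regime by that of the intervention on `k` cancels the Jacobian and every
mechanism except the `k`-th, leaving `log p_k - log p̃_k = (log q_k - log q̃_k) ∘ φ`. Differentiate
this in a direction `z_j` with `j ∉ anc̄(k)`: the left side reads only the coordinates of `k` and its
parents, so it contributes nothing; on the right the parents of `k` drop out by induction along the
graph, so only `∂_k (log q_k - log q̃_k) (φ z) * ∂_j φ_k z = 0` remains. The first factor is nonzero
almost everywhere because `φ` pulls null sets back to null sets, and continuity of `∂_j φ_k` removes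
the exceptional set.
-/

section Transport

variable {X Y : Type*} [MeasurableSpace X] [MeasurableSpace Y] {μ : Measure X} {ν : Measure Y}
  {φ : X → Y}

theorem map_comp_eq_of_map_eq {Z : Type*} [MeasurableSpace Z] {f : X → Z} {f' : Y → Z} {g' : Z → Y}
    (hf : Measurable f) (hf' : Measurable f') (hg' : Measurable g')
    (hinv : Function.LeftInverse g' f') (h : μ.map f = ν.map f') : μ.map (g' ∘ f) = ν := by
  rw [← Measure.map_map hg' hf, h, Measure.map_map hg' hf', hinv.comp_eq_id, Measure.map_id]

theorem quasiMeasurePreserving_of_map_withDensity_eq {a : X → ENNReal} {b : Y → ENNReal}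
    (hφ : Measurable φ) (ha : AEMeasurable a μ) (ha₀ : ∀ᵐ x ∂μ, a x ≠ 0)
    (h : (μ.withDensity a).map φ = ν.withDensity b) : Measure.QuasiMeasurePreserving φ μ ν where
  measurable := hφ
  absolutelyContinuous :=
    ((withDensity_absolutelyContinuous' ha ha₀).map hφ).trans
      (h ▸ withDensity_absolutelyContinuous ν b)

theorem map_withDensity_comp {r : Y → ENNReal} (hφ : Measurable φ) (hr : Measurable r) :
    (μ.withDensity (r ∘ φ)).map φ = (μ.map φ).withDensity r := by
  ext s hs
  rw [Measure.map_apply hφ hs, withDensity_apply _ (hφ hs), withDensity_apply _ hs,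
    setLIntegral_map hs hr hφ]
  rfl

theorem withDensity_mul_comp_eq {a a' : X → ENNReal} {b r : Y → ENNReal}
    (hφ : MeasurableEmbedding φ) (ha : Measurable a) (hb : Measurable b) (hr : Measurable r)
    (h : (μ.withDensity a).map φ = ν.withDensity b)
    (h' : (μ.withDensity a').map φ = ν.withDensity (b * r)) :
    μ.withDensity (a * (r ∘ φ)) = μ.withDensity a' := by
  apply hφ.map_injective
  rw [withDensity_mul _ ha (hr.comp hφ.measurable), map_withDensity_comp hφ.measurable hr, h,
    ← withDensity_mul _ hb hr, h']

theorem div_eq_div_comp_of_map_withDensity_eq [TopologicalSpace X] [BorelSpace X]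
    [TopologicalSpace Y] [BorelSpace Y] [SigmaFinite μ] [μ.IsOpenPosMeasure]
    {a a' : X → ℝ} {b b' : Y → ℝ} (hφ : MeasurableEmbedding φ) (hφc : Continuous φ)
    (ha : Continuous a) (ha' : Continuous a') (hb : Continuous b) (hb' : Continuous b')
    (ha₀ : ∀ x, 0 < a x) (ha'₀ : ∀ x, 0 ≤ a' x) (hb₀ : ∀ y, 0 < b y) (hb'₀ : ∀ y, 0 ≤ b' y)
    (h : (μ.withDensity fun x => ENNReal.ofReal (a x)).map φ =
      ν.withDensity fun y => ENNReal.ofReal (b y))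
    (h' : (μ.withDensity fun x => ENNReal.ofReal (a' x)).map φ =
      ν.withDensity fun y => ENNReal.ofReal (b' y)) (x : X) :
    a' x / a x = b' (φ x) / b (φ x) := by
  have hr : Continuous fun y => b' y / b y := hb'.div hb fun y => (hb₀ y).ne'
  have hr₀ : ∀ y, 0 ≤ b' y / b y := fun y => div_nonneg (hb'₀ y) (hb₀ y).le
  have hb'_eq : (fun y => ENNReal.ofReal (b' y)) =
      (fun y => ENNReal.ofReal (b y)) * fun y => ENNReal.ofReal (b' y / b y) := by
    ext y
    rw [Pi.mul_apply, ← ENNReal.ofReal_mul (hb₀ y).le, mul_div_cancel₀ _ (hb₀ y).ne']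
  have hcont : Continuous ((fun x => ENNReal.ofReal (a x)) * fun x =>
      ENNReal.ofReal (b' (φ x) / b (φ x))) := by
    refine (ENNReal.continuous_ofReal.comp (ha.mul (hr.comp hφc))).congr fun x => ?_
    exact ENNReal.ofReal_mul (ha₀ x).le
  have hcont' : Continuous fun x => ENNReal.ofReal (a' x) := ENNReal.continuous_ofReal.comp ha'
  have hdensity := (withDensity_eq_iff_of_sigmaFinite hcont.measurable.aemeasurable
    hcont'.measurable.aemeasurable).1 <|
      withDensity_mul_comp_eq (r := fun y => ENNReal.ofReal (b' y / b y)) hφ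
        ha.measurable.ennreal_ofReal hb.measurable.ennreal_ofReal hr.measurable.ennreal_ofReal h
        (h'.trans (congrArg ν.withDensity hb'_eq))
  have hx := congrFun ((hcont.ae_eq_iff_eq μ hcont').1 hdensity) x
  rw [Pi.mul_apply, ← ENNReal.ofReal_mul (ha₀ x).le,
    ENNReal.ofReal_eq_ofReal_iff (mul_nonneg (ha₀ x).le (hr₀ _)) (ha'₀ x)] at hx
  rw [← hx, mul_div_cancel_left₀ _ (ha₀ x).ne']

end Transport

section Derivative

theorem dependsOn_fderiv {𝕜 ι F : Type*} {E : ι → Type*} [NontriviallyNormedField 𝕜] [Finite ι]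
    [∀ i, NormedAddCommGroup (E i)] [∀ i, NormedSpace 𝕜 (E i)]
    [NormedAddCommGroup F] [NormedSpace 𝕜 F] {h : (Π i, E i) → F} {s : Set ι}
    (hs : DependsOn h s) (z : Π i, E i) : DependsOn (fderiv 𝕜 h z) s := by
  have := Fintype.ofFinite ι
  intro u v huv
  by_cases hd : DifferentiableAt 𝕜 h z
  · rw [← hd.lineDeriv_eq_fderiv, ← hd.lineDeriv_eq_fderiv, lineDeriv, lineDeriv]
    congr 1
    ext t
    exact hs fun i hi => by simp only [Pi.add_apply, Pi.smul_apply, huv i hi]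
  · simp only [fderiv_zero_of_not_differentiableAt hd, zero_apply]

variable {ι : Type*} [DecidableEq ι] {φ : (ι → ℝ) → ι → ℝ}

theorem fderiv_apply_eq_zero_of_dependsOn_comp [Finite ι] {B : (ι → ℝ) → ℝ} {k : ι}
    {s : Set ι} {z u : ι → ℝ} (hB : DependsOn B (insert k s)) (hBφ : DependsOn (B ∘ φ) (insert k s))
    (hφ : DifferentiableAt ℝ φ z) (hk : fderiv ℝ B (φ z) (Pi.single k 1) ≠ 0)
    (hu : ∀ i ∈ insert k s, u i = 0) (hs : ∀ i ∈ s, fderiv ℝ φ z u i = 0) :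
    fderiv ℝ φ z u k = 0 := by
  have := Fintype.ofFinite ι
  set v := fderiv ℝ φ z u
  have hBd : DifferentiableAt ℝ B (φ z) := by
    by_contra hBd
    exact hk (by rw [fderiv_zero_of_not_differentiableAt hBd, zero_apply])
  have hv : ∀ i ∈ insert k s, v i = (v k • Pi.single k 1 : ι → ℝ) i := by
    intro i hi
    obtain rfl | hik := eq_or_ne i k
    · simp
    · simp [hik, hs i (hi.resolve_left hik)]
  refine (mul_eq_zero.1 ?_).resolve_right hk
  calc v k * fderiv ℝ B (φ z) (Pi.single k 1)
      = fderiv ℝ B (φ z) v := by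
        rw [dependsOn_fderiv hB (φ z) hv, map_smul, smul_eq_mul]
    _ = fderiv ℝ (B ∘ φ) z u := by rw [fderiv_comp z hBd hφ, ContinuousLinearMap.comp_apply]
    _ = fderiv ℝ (B ∘ φ) z 0 := dependsOn_fderiv hBφ z hu
    _ = 0 := map_zero _

theorem fderiv_single_apply_eq_zero_of_not_reflTransGen [Fintype ι] {pa : ι → Set ι}
    (hpa : WellFounded fun j i => j ∈ pa i) (hφ : ContDiff ℝ 1 φ) {B : ι → (ι → ℝ) → ℝ}
    (hB : ∀ k, DependsOn (B k) (insert k (pa k)))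
    (hBφ : ∀ k, DependsOn (B k ∘ φ) (insert k (pa k)))
    (hdense : ∀ k, Dense {z | fderiv ℝ (B k) (φ z) (Pi.single k 1) ≠ 0}) {i j : ι}
    (hij : ¬Relation.ReflTransGen (fun j i => j ∈ pa i) j i) (z : ι → ℝ) :
    fderiv ℝ φ z (Pi.single j 1) i = 0 := by
  induction i using hpa.induction generalizing z with
  | h k ih =>
    have hj : ∀ i ∈ insert k (pa k), (Pi.single j 1 : ι → ℝ) i = 0 := by
      refine fun i hi => Pi.single_eq_of_ne (fun h => hij ?_) 1
      subst h
      obtain rfl | hi := hi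
      exacts [.refl, .single hi]
    have hparents : ∀ z, ∀ i ∈ pa k, fderiv ℝ φ z (Pi.single j 1) i = 0 :=
      fun z i hi => ih i hi (fun h => hij (h.tail hi)) z
    have hcont : Continuous fun z => fderiv ℝ φ z (Pi.single j 1) k :=
      (continuous_apply k).comp ((hφ.continuous_fderiv one_ne_zero).clm_apply continuous_const)
    refine congrFun (hcont.ext_on (hdense k) continuous_const fun z hz => ?_) z
    exact fderiv_apply_eq_zero_of_dependsOn_comp (hB k) (hBφ k)
      (hφ.differentiable one_ne_zero z) hz hj (hparents z)

end Derivative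

section Mechanisms

variable {ι : Type*}

/-- A mechanism of a causal model: a strictly positive continuous function of the coordinates in
`s`. For node `k` of a graph one takes `s = {k} ∪ pa k`. Mechanisms are unnormalised. -/
structure IsMechanism (s : Set ι) (r : (ι → ℝ) → ℝ) : Prop where
  pos : ∀ z, 0 < r z
  continuous : Continuous r
  dependsOn : DependsOn r s

theorem IsMechanism.mono {s t : Set ι} {r : (ι → ℝ) → ℝ} (hst : s ⊆ t) (hr : IsMechanism s r) :
    IsMechanism t r :=
  ⟨hr.pos, hr.continuous, hr.dependsOn.mono hst⟩

theorem IsMechanism.dependsOn_log_sub_log {s : Set ι} {r r' : (ι → ℝ) → ℝ}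
    (hr : IsMechanism s r) (hr' : IsMechanism s r') :
    DependsOn (fun z => Real.log (r z) - Real.log (r' z)) s := by
  intro z w hzw
  simp only [hr.dependsOn hzw, hr'.dependsOn hzw]

theorem IsCondFamily.isMechanism {d : ℕ} {pa : Fin d → Finset (Fin d)}
    {p : Fin d → (Fin d → ℝ) → ℝ} (hp : IsCondFamily pa p) (k : Fin d) :
    IsMechanism (insert k (pa k : Set (Fin d))) (p k) where
  pos := (hp k).1
  continuous := (hp k).2.1.continuous
  dependsOn := fun z w h => (hp k).2.2.1 z w fun i hi => h i (by simpa using hi)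

variable [Fintype ι] [DecidableEq ι]

theorem prod_div_mul_prod_compl {K : Type*} [CommGroupWithZero K] {k : ι} {p : ι → K}
    (hp : ∀ i ≠ k, p i ≠ 0) (x : K) :
    (∏ i, p i) / (x * ∏ i ∈ {k}ᶜ, p i) = p k / x := by
  rw [Fintype.prod_eq_mul_prod_compl k, mul_div_mul_right]
  exact Finset.prod_ne_zero_iff.2 fun i hi => hp i (by simpa using hi)

theorem log_sub_log_eq_comp_of_map_eq {s : ι → Set ι} {p q : ι → (ι → ℝ) → ℝ}
    (hp : ∀ i, IsMechanism (s i) (p i)) (hq : ∀ i, IsMechanism (s i) (q i)) {k : ι}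
    {p' q' : (ι → ℝ) → ℝ} (hp' : IsMechanism (s k) p') (hq' : IsMechanism (s k) q')
    {φ : (ι → ℝ) → ι → ℝ} (hφ : Continuous φ) (hφi : Function.Injective φ)
    (h₀ : (volume.withDensity fun z => ENNReal.ofReal (∏ i, p i z)).map φ =
      volume.withDensity fun z => ENNReal.ofReal (∏ i, q i z))
    (hk : (volume.withDensity fun z => ENNReal.ofReal (p' z * ∏ i ∈ {k}ᶜ, p i z)).map φ =
      volume.withDensity fun z => ENNReal.ofReal (q' z * ∏ i ∈ {k}ᶜ, q i z)) :
    (fun z => Real.log (p k z) - Real.log (p' z)) =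
      (fun z => Real.log (q k z) - Real.log (q' z)) ∘ φ := by
  have prod_pos {r : ι → (ι → ℝ) → ℝ} (hr : ∀ i, IsMechanism (s i) (r i)) (t : Finset ι) z :
      0 < ∏ i ∈ t, r i z := Finset.prod_pos fun i _ => (hr i).pos z
  have continuous_prod {r : ι → (ι → ℝ) → ℝ} (hr : ∀ i, IsMechanism (s i) (r i)) (t : Finset ι) :
      Continuous fun z => ∏ i ∈ t, r i z := continuous_finsetProd _ fun i _ => (hr i).continuous
  ext z
  have hratio := div_eq_div_comp_of_map_withDensity_eq (a := fun z => p' z * ∏ i ∈ {k}ᶜ, p i z)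
    (b := fun z => q' z * ∏ i ∈ {k}ᶜ, q i z) (hφ.measurableEmbedding hφi) hφ
    (hp'.continuous.mul (continuous_prod hp _)) (continuous_prod hp _)
    (hq'.continuous.mul (continuous_prod hq _)) (continuous_prod hq _)
    (fun z => mul_pos (hp'.pos z) (prod_pos hp _ z)) (fun z => (prod_pos hp _ z).le)
    (fun z => mul_pos (hq'.pos z) (prod_pos hq _ z)) (fun z => (prod_pos hq _ z).le) hk h₀ z
  rw [prod_div_mul_prod_compl fun i _ => ((hp i).pos z).ne',
    prod_div_mul_prod_compl fun i _ => ((hq i).pos (φ z)).ne'] at hratio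
  rw [Function.comp_apply, ← Real.log_div ((hp k).pos z).ne' (hp'.pos z).ne', hratio,
    Real.log_div ((hq k).pos _).ne' (hq'.pos _).ne']

end Mechanisms

theorem cauca_single_node_identifiability_ancestral_general {ι : Type*} [Fintype ι] [DecidableEq ι]
    {pa : ι → Set ι} (hpa : WellFounded fun j i => j ∈ pa i)
    {p q pt qt : ι → (ι → ℝ) → ℝ}
    (hp : ∀ k, IsMechanism (insert k (pa k)) (p k))
    (hq : ∀ k, IsMechanism (insert k (pa k)) (q k))
    (hpt : ∀ k, IsMechanism (insert k (pa k)) (pt k))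
    (hqt : ∀ k, IsMechanism (insert k (pa k)) (qt k))
    (hdisc : ∀ k, ∀ᵐ z : ι → ℝ,
      fderiv ℝ (fun w => Real.log (q k w) - Real.log (qt k w)) z (Pi.single k 1) ≠ 0)
    {φ : (ι → ℝ) → ι → ℝ} (hφ : ContDiff ℝ 1 φ) (hφi : Function.Injective φ)
    (hmatch0 : (volume.withDensity fun z => ENNReal.ofReal (∏ i, p i z)).map φ =
      volume.withDensity fun z => ENNReal.ofReal (∏ i, q i z))
    (hmatch : ∀ k,
      (volume.withDensity fun z => ENNReal.ofReal (pt k z * ∏ i ∈ {k}ᶜ, p i z)).map φ =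
        volume.withDensity fun z => ENNReal.ofReal (qt k z * ∏ i ∈ {k}ᶜ, q i z))
    {i j : ι} (hij : ¬Relation.ReflTransGen (fun j i => j ∈ pa i) j i) (z : ι → ℝ) :
    fderiv ℝ (fun w => φ w i) z (Pi.single j 1) = 0 := by
  have hlog (k : ι) := log_sub_log_eq_comp_of_map_eq hp hq (hpt k) (hqt k) hφ.continuous hφi
    hmatch0 (hmatch k)
  have hnull : Measure.QuasiMeasurePreserving φ :=
    quasiMeasurePreserving_of_map_withDensity_eq hφ.continuous.measurable
      (continuous_finsetProd _ fun i _ => (hp i).continuous).measurable.ennreal_ofReal.aemeasurable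
      (ae_of_all _ fun z =>
        (ENNReal.ofReal_pos.2 (Finset.prod_pos fun i _ => (hp i).pos z)).ne') hmatch0
  rw [fderiv_apply (hφ.differentiable one_ne_zero z)]
  exact fderiv_single_apply_eq_zero_of_not_reflTransGen hpa hφ
    (fun k => (hq k).dependsOn_log_sub_log (hqt k))
    (fun k => hlog k ▸ (hp k).dependsOn_log_sub_log (hpt k))
    (fun k => Measure.dense_of_ae (hnull.ae (hdisc k))) hij z

/-- **Theorem 1 (i).** CauCA with one (perfect or imperfect) stochastic single-node
intervention per node, satisfying interventional discrepancy in both models: if the two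
models generate the same pushforward distributions in the unintervened regime and in every
interventional regime, then each component `φ i` of `φ := f′⁻¹ ∘ f` depends only on the
coordinates in the ancestral closure of `i`; i.e. `∂φ i / ∂z j ≡ 0` for every
`j ∉ anc̄(i)`. -/
theorem cauca_single_node_identifiability_ancestral {d : ℕ}
    (pa : Fin d → Finset (Fin d))
    (hpa : ∀ i : Fin d, ∀ j ∈ pa i, j < i)
    (p q : Fin d → (Fin d → ℝ) → ℝ)
    (hp : IsCondFamily pa p) (hq : IsCondFamily pa q)
    (pak : Fin d → Finset (Fin d)) (hpak : ∀ k, pak k ⊆ pa k)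
    (pt qt : Fin d → (Fin d → ℝ) → ℝ)
    (hpt : ∀ k : Fin d, (∀ z, 0 < pt k z) ∧ ContDiff ℝ 1 (pt k) ∧
        DependsOnlyOn (pt k) (insert k (pak k)) ∧
        ∀ z, (∫ t : ℝ, pt k (Function.update z k t)) = 1)
    (hqt : ∀ k : Fin d, (∀ z, 0 < qt k z) ∧ ContDiff ℝ 1 (qt k) ∧
        DependsOnlyOn (qt k) (insert k (pak k)) ∧
        ∀ z, (∫ t : ℝ, qt k (Function.update z k t)) = 1)
    (hdiscp : ∀ k : Fin d, ∀ᵐ (z : Fin d → ℝ) ∂volume,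
        fderiv ℝ (fun w => Real.log (p k w) - Real.log (pt k w)) z (Pi.single k 1) ≠ 0)
    (hdiscq : ∀ k : Fin d, ∀ᵐ (z : Fin d → ℝ) ∂volume,
        fderiv ℝ (fun w => Real.log (q k w) - Real.log (qt k w)) z (Pi.single k 1) ≠ 0)
    (f f' g' : (Fin d → ℝ) → (Fin d → ℝ))
    (hf : IsC1Diffeo f) (hf' : ContDiff ℝ 1 f') (hg' : ContDiff ℝ 1 g')
    (hinv₁ : Function.LeftInverse g' f') (hinv₂ : Function.RightInverse g' f')
    (hmatch0 : Measure.map f (densityMeasure (jointDensity p)) =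
        Measure.map f' (densityMeasure (jointDensity q)))
    (hmatch : ∀ k : Fin d,
        Measure.map f (densityMeasure fun z =>
            pt k z * ∏ i ∈ ({k} : Finset (Fin d))ᶜ, p i z) =
        Measure.map f' (densityMeasure fun z =>
            qt k z * ∏ i ∈ ({k} : Finset (Fin d))ᶜ, q i z)) :
    ∀ i j : Fin d, ¬(IsAnc pa j i ∨ j = i) →
      ∀ z : Fin d → ℝ, fderiv ℝ (fun w => g' (f w) i) z (Pi.single j 1) = 0 := by
  obtain ⟨hf, g, -, hgf, -⟩ := hf
  have transport {μ ν : Measure (Fin d → ℝ)} : μ.map f = ν.map f' → μ.map (g' ∘ f) = ν :=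
    map_comp_eq_of_map_eq hf.continuous.measurable hf'.continuous.measurable
      hg'.continuous.measurable hinv₁
  have widen (k : Fin d) : insert k (pak k : Set (Fin d)) ⊆ insert k (pa k : Set (Fin d)) :=
    Set.insert_subset_insert (Finset.coe_subset.2 (hpak k))
  intro i j hij
  exact cauca_single_node_identifiability_ancestral_general (pa := fun i => (pa i : Set (Fin d)))
    (Subrelation.wf (fun {j i} => hpa i j) wellFounded_lt) hp.isMechanism hq.isMechanism
    (fun k => (IsCondFamily.isMechanism hpt k).mono (widen k))
    (fun k => (IsCondFamily.isMechanism hqt k).mono (widen k)) hdiscq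
    (hg'.comp hf) (hinv₂.injective.comp hgf.injective) (transport hmatch0)
    (fun k => transport (hmatch k))
    (fun h => hij ((Relation.reflTransGen_iff_eq_or_transGen.1 h).symm.imp_right Eq.symm))
end
end

section
/- Let G be a DAG on [d], let (p_i), (q_i) be C¹ conditional-density families for G, and for each k ∈ [d] let p̃_k, q̃_k be perfect intervened densities on node k (strictly positive C¹ probability densities on ℝ), satisfying the interventional discrepancy in both families; let f, f′ be C¹ diffeomorphisms of ℝ^d with f_*P^k = f′_*Q^k for all k ∈ {0,…,d}, so that φ := f′⁻¹∘f = (h_1(z_1),…,h_d(z_d)) for C¹ diffeomorphisms h_k of ℝ. Let F_k and G_k be the cumulative distribution functions of the intervened densities p̃_k and q̃_k, and Ḡ_k := 1 − G_k. Then for every k ∈ [d], h_k = G_k⁻¹ ∘ F_k or h_k = Ḡ_k⁻¹ ∘ F_k. In particular, if p̃_k = q̃_k for all k, then each h_k is either the identity or the order-reversing map F_k⁻¹ ∘ (1 − F_k). -/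
open MeasureTheory

noncomputable section

/-- The cumulative distribution function of a density `r` on `ℝ`. -/
def cdfOfDensity (r : ℝ → ℝ) : ℝ → ℝ := fun x => ∫ t in Set.Iic x, r t

/- A matching pair of interventions on node `k` makes `φ = f'⁻¹ ∘ f` push `P^k` to `Q^k`. Because
the intervention on `k` is perfect, the `k`-th marginals of these measures are the intervened
densities themselves: the other conditional factors integrate to `1` one after another, from the
last coordinate to the first. Hence `h k` transports one intervened law to the other, and an
injective continuous map of `ℝ` that does so is determined by its direction of monotonicity. -/

open ProbabilityTheory Set

section ConditionalProduct

variable {ι : Type*} [LinearOrder ι] {X : ι → Type*} [∀ i, MeasurableSpace (X i)]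
  {μ : ∀ i, Measure (X i)} [∀ i, SigmaFinite (μ i)] {ρ : ι → (∀ i, X i) → ENNReal}

theorem lmarginal_prod_of_dependsOn_Iic {c : ι → ENNReal}
    (hmeas : ∀ i, Measurable (ρ i)) (hdep : ∀ i, DependsOn (ρ i) (Iic i))
    (hc : ∀ i z, ∫⁻ t, ρ i (Function.update z i t) ∂μ i = c i) (T : Finset ι) (z : ∀ i, X i) :
    lmarginal μ T (fun w => ∏ i ∈ T, ρ i w) z = ∏ i ∈ T, c i := by
  induction T using Finset.induction_on_max with
  | empty => simp
  | insert a T hT ih =>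
    have ha : a ∉ T := fun h => lt_irrefl a (hT a h)
    have earlier_factors_const (w t) :
        ∏ i ∈ T, ρ i (Function.update w a t) = ∏ i ∈ T, ρ i w :=
      Finset.prod_congr rfl fun i hi => hdep i fun j hj =>
        Function.update_of_ne (lt_of_le_of_lt hj (hT i hi)).ne _ _
    have integrate_last (w) : ∫⁻ t, ∏ i ∈ insert a T, ρ i (Function.update w a t) ∂μ a
        = c a * ∏ i ∈ T, ρ i w := by
      simp only [Finset.prod_insert ha, earlier_factors_const]
      rw [← hc a w]
      exact lintegral_mul_const _ ((hmeas a).comp (measurable_update w))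
    rw [lmarginal_insert' _ (by fun_prop) ha]
    simp only [integrate_last]
    rw [Finset.prod_insert ha, ← ih, lmarginal, lmarginal,
      lintegral_const_mul _ (by fun_prop)]

variable [Fintype ι] {k : ι}

theorem lintegral_eval_mul_prod_compl [Nonempty (∀ i, X i)] {g : X k → ENNReal}
    (hg : Measurable g) (hmeas : ∀ i ≠ k, Measurable (ρ i))
    (hdep : ∀ i ≠ k, DependsOn (ρ i) (Iic i))
    (hone : ∀ i ≠ k, ∀ z, ∫⁻ t, ρ i (Function.update z i t) ∂μ i = 1) :
    ∫⁻ z, g (z k) * ∏ i ∈ ({k} : Finset ι)ᶜ, ρ i z ∂Measure.pi μ = ∫⁻ x, g x ∂μ k := by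
  let σ : ι → (∀ i, X i) → ENNReal := Function.update ρ k fun z => g (z k)
  let c : ι → ENNReal := Function.update 1 k (∫⁻ x, g x ∂μ k)
  have prod_σ (z) : ∏ i, σ i z = g (z k) * ∏ i ∈ ({k} : Finset ι)ᶜ, ρ i z := by
    have hcompl (i) (hi : i ∈ ({k} : Finset ι)ᶜ) : σ i z = ρ i z := by
      simp only [σ, Function.update_of_ne (show i ≠ k by simpa using hi)]
    rw [Fintype.prod_eq_mul_prod_compl k, Finset.prod_congr rfl hcompl]
    simp only [σ, Function.update_self]
  have prod_c : ∏ i, c i = ∫⁻ x, g x ∂μ k := by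
    simp [c, Finset.prod_update_of_mem]
  have hσmeas (i) : Measurable (σ i) := by
    rcases eq_or_ne i k with rfl | hi
    · simpa only [σ, Function.update_self] using! hg.comp (measurable_pi_apply i)
    · simpa [σ, hi] using hmeas i hi
  have hσdep (i) : DependsOn (σ i) (Iic i) := by
    rcases eq_or_ne i k with rfl | hi
    · intro z w hzw
      simp [σ, hzw i self_mem_Iic]
    · simpa [σ, hi] using hdep i hi
  have hσc (i z) : ∫⁻ t, σ i (Function.update z i t) ∂μ i = c i := by
    rcases eq_or_ne i k with rfl | hi
    · simp [σ, c]
    · simpa [σ, c, hi] using hone i hi z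
  obtain ⟨z₀⟩ := ‹Nonempty (∀ i, X i)›
  simp only [← prod_σ, ← prod_c]
  rw [lintegral_eq_lmarginal_univ z₀]
  exact lmarginal_prod_of_dependsOn_Iic hσmeas hσdep hσc Finset.univ z₀

theorem map_eval_withDensity_mul_prod_compl [Nonempty (∀ i, X i)] {r : X k → ENNReal}
    (hr : Measurable r) (hmeas : ∀ i ≠ k, Measurable (ρ i))
    (hdep : ∀ i ≠ k, DependsOn (ρ i) (Iic i))
    (hone : ∀ i ≠ k, ∀ z, ∫⁻ t, ρ i (Function.update z i t) ∂μ i = 1) :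
    ((Measure.pi μ).withDensity fun z => r (z k) * ∏ i ∈ ({k} : Finset ι)ᶜ, ρ i z).map
      (fun z => z k) = (μ k).withDensity r := by
  have hprod : Measurable fun z => r (z k) * ∏ i ∈ ({k} : Finset ι)ᶜ, ρ i z :=
    (hr.comp (measurable_pi_apply k)).mul
      (Finset.measurable_prod _ fun i hi => hmeas i (by simpa using hi))
  refine Measure.ext_of_lintegral _ fun φ hφ => ?_
  have hφk : Measurable fun z : ∀ i, X i => φ (z k) := hφ.comp (measurable_pi_apply k)
  rw [lintegral_map hφ (measurable_pi_apply k),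
    lintegral_withDensity_eq_lintegral_mul _ hprod hφk,
    lintegral_withDensity_eq_lintegral_mul _ hr hφ,
    ← lintegral_eval_mul_prod_compl (hr.mul hφ) hmeas hdep hone]
  exact lintegral_congr fun z => mul_right_comm _ _ _

end ConditionalProduct

theorem map_map_eq_map_of_semiconj {α β γ R S : Type*} [MeasurableSpace α]
    [MeasurableSpace β] [MeasurableSpace γ] [MeasurableSpace R] [MeasurableSpace S]
    {P : Measure α} {Q : Measure β} {f : α → γ} {f' : β → γ} {g' : γ → β} {π : α → R} {π' : β → S}
    {h : R → S} (hf : Measurable f) (hf' : Measurable f') (hg' : Measurable g')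
    (hπ : Measurable π) (hπ' : Measurable π') (hh : Measurable h)
    (hinv : Function.LeftInverse g' f') (hφ : ∀ z, π' (g' (f z)) = h (π z))
    (hPQ : P.map f = Q.map f') : (P.map π).map h = Q.map π' :=
  calc (P.map π).map h = P.map (h ∘ π) := Measure.map_map hh hπ
    _ = P.map ((π' ∘ g') ∘ f) := congrArg P.map (funext fun z => (hφ z).symm)
    _ = (P.map f).map (π' ∘ g') := (Measure.map_map (hπ'.comp hg') hf).symm
    _ = (Q.map f').map (π' ∘ g') := by rw [hPQ]
    _ = Q.map ((π' ∘ g') ∘ f') := Measure.map_map (hπ'.comp hg') hf'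
    _ = Q.map π' := by rw [Function.comp_assoc, hinv.comp_eq_id, Function.comp_id]

section MonotoneTransport

variable {P : Measure ℝ} [IsProbabilityMeasure P] {h : ℝ → ℝ}

theorem cdf_map_apply_of_strictMono (hh : StrictMono h) (x : ℝ) :
    cdf (P.map h) (h x) = cdf P x := by
  have hm : Measurable h := hh.monotone.measurable
  have := Measure.isProbabilityMeasure_map (μ := P) hm.aemeasurable
  have hpre : h ⁻¹' Iic (h x) = Iic x := ext fun y => hh.le_iff_le
  rw [cdf_eq_real, cdf_eq_real, map_measureReal_apply hm measurableSet_Iic, hpre]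

theorem cdf_map_apply_of_strictAnti [NullSingletonClass P] (hh : StrictAnti h) (x : ℝ) :
    cdf (P.map h) (h x) = 1 - cdf P x := by
  have hm : Measurable h := hh.antitone.measurable
  have := Measure.isProbabilityMeasure_map (μ := P) hm.aemeasurable
  have hpre : h ⁻¹' Iic (h x) = Ici x := ext fun y => hh.le_iff_ge
  rw [cdf_eq_real, cdf_eq_real, map_measureReal_apply hm measurableSet_Iic, hpre,
    measureReal_congr Ioi_ae_eq_Ici.symm, ← compl_Iic, probReal_compl_eq_one_sub measurableSet_Iic]

end MonotoneTransport

/-- A probability density on `ℝ`, with no regularity beyond measurability: the setting in which a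
law on `ℝ` is described by its cdf. -/
structure IsProbDensity (r : ℝ → ℝ) : Prop where
  nonneg : ∀ x, 0 ≤ r x
  measurable : Measurable r
  integral_eq_one : ∫ x, r x = 1

theorem IsC1Density.isProbDensity {r : ℝ → ℝ} (hr : IsC1Density r) : IsProbDensity r where
  nonneg x := (hr.1 x).le
  measurable := hr.2.1.continuous.measurable
  integral_eq_one := hr.2.2

namespace IsProbDensity

variable {r : ℝ → ℝ}

theorem integrable (hr : IsProbDensity r) : Integrable r :=
  integrable_of_integral_eq_one hr.integral_eq_one

theorem lintegral_eq_one (hr : IsProbDensity r) : ∫⁻ x, ENNReal.ofReal (r x) = 1 := by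
  rw [← ofReal_integral_eq_lintegral_ofReal hr.integrable (.of_forall hr.nonneg),
    hr.integral_eq_one, ENNReal.ofReal_one]

theorem isProbabilityMeasure (hr : IsProbDensity r) : IsProbabilityMeasure (densityMeasure₁ r) :=
  ⟨by rw [densityMeasure₁, withDensity_apply _ .univ, setLIntegral_univ, hr.lintegral_eq_one]⟩

theorem cdfOfDensity_eq_cdf (hr : IsProbDensity r) :
    cdfOfDensity r = cdf (densityMeasure₁ r) := by
  have := hr.isProbabilityMeasure
  funext x
  rw [cdf_eq_real, measureReal_def, densityMeasure₁, withDensity_apply _ measurableSet_Iic,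
    cdfOfDensity, integral_eq_lintegral_of_nonneg_ae (.of_forall hr.nonneg)
      hr.measurable.aestronglyMeasurable]

theorem strictMono_cdfOfDensity (hr : IsProbDensity r) (hpos : ∀ x, 0 < r x) :
    StrictMono (cdfOfDensity r) := fun a b hab => by
  have hint := hr.integrable
  have hdiff : cdfOfDensity r b - cdfOfDensity r a = ∫ x in a..b, r x :=
    intervalIntegral.integral_Iic_sub_Iic hint.integrableOn hint.integrableOn
  have hincr := intervalIntegral.intervalIntegral_pos_of_pos hint.intervalIntegrable hpos hab
  exact sub_pos.mp (hdiff ▸ hincr)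

end IsProbDensity

theorem nullSingletonClass_densityMeasure₁ (r : ℝ → ℝ) : NullSingletonClass (densityMeasure₁ r) :=
  ⟨fun x => withDensity_absolutelyContinuous _ _ (measure_singleton x)⟩

/-- A family of conditional densities along the order of the coordinates, with no regularity
beyond measurability. The `i`-th factor may involve every coordinate up to `i`; a DAG in
topological order is the special case where it involves only `i` and the parents of `i`. -/
structure IsOrderedCondFamily {d : ℕ} (p : Fin d → (Fin d → ℝ) → ℝ) : Prop where
  measurable : ∀ i, Measurable (p i)
  dependsOn : ∀ i, DependsOn (p i) (Iic i)
  isProbDensity : ∀ i z, IsProbDensity fun t => p i (Function.update z i t)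

theorem IsCondFamily.isOrderedCondFamily {d : ℕ} {pa : Fin d → Finset (Fin d)}
    {p : Fin d → (Fin d → ℝ) → ℝ} (hp : IsCondFamily pa p) (hpa : ∀ i, ∀ j ∈ pa i, j < i) :
    IsOrderedCondFamily p where
  measurable i := (hp i).2.1.continuous.measurable
  dependsOn i z w hzw := (hp i).2.2.1 z w fun j hj => hzw j <|
    (Finset.mem_insert.mp hj).elim le_of_eq fun hj => (hpa i j hj).le
  isProbDensity i z :=
    { nonneg := fun _ => ((hp i).1 _).le
      measurable := (hp i).2.1.continuous.measurable.comp (measurable_update z)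
      integral_eq_one := (hp i).2.2.2 z }

theorem IsOrderedCondFamily.nonneg {d : ℕ} {p : Fin d → (Fin d → ℝ) → ℝ}
    (hp : IsOrderedCondFamily p) (i : Fin d) (z : Fin d → ℝ) : 0 ≤ p i z := by
  simpa only [Function.update_eq_self] using (hp.isProbDensity i z).nonneg (z i)

theorem IsOrderedCondFamily.map_eval_interventional {d : ℕ} {p : Fin d → (Fin d → ℝ) → ℝ}
    (hp : IsOrderedCondFamily p) {r : ℝ → ℝ} (hr : Measurable r) (hr0 : ∀ x, 0 ≤ r x) (k : Fin d) :
    (densityMeasure fun z => r (z k) * ∏ i ∈ ({k} : Finset (Fin d))ᶜ, p i z).map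
      (fun z => z k) = densityMeasure₁ r := by
  have hmarginal := map_eval_withDensity_mul_prod_compl (k := k) (X := fun _ => ℝ)
    (μ := fun _ => volume) (ρ := fun i z => ENNReal.ofReal (p i z)) hr.ennreal_ofReal
    (fun i _ => (hp.measurable i).ennreal_ofReal)
    (fun i _ _ _ hzw => congrArg ENNReal.ofReal (hp.dependsOn i hzw))
    (fun i _ z => (hp.isProbDensity i z).lintegral_eq_one)
  simp only [densityMeasure, ENNReal.ofReal_mul (hr0 _),
    ENNReal.ofReal_prod_of_nonneg fun i _ => hp.nonneg i _]
  exact hmarginal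

theorem IsProbDensity.cdfOfDensity_comp_eq_or {r s : ℝ → ℝ} (hr : IsProbDensity r)
    (hs : IsProbDensity s) {h : ℝ → ℝ} (hcont : Continuous h) (hinj : Function.Injective h)
    (hmap : (densityMeasure₁ r).map h = densityMeasure₁ s) :
    (∀ x, cdfOfDensity s (h x) = cdfOfDensity r x) ∨
      (∀ x, cdfOfDensity s (h x) = 1 - cdfOfDensity r x) := by
  have := hr.isProbabilityMeasure
  have := nullSingletonClass_densityMeasure₁ r
  rw [hs.cdfOfDensity_eq_cdf, hr.cdfOfDensity_eq_cdf, ← hmap]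
  exact (hcont.strictMono_of_inj hinj).imp cdf_map_apply_of_strictMono cdf_map_apply_of_strictAnti

theorem cauca_scaling_indeterminacy_cdf_general {d : ℕ} {E : Type*} [MeasurableSpace E]
    {p q : Fin d → (Fin d → ℝ) → ℝ} (hp : IsOrderedCondFamily p) (hq : IsOrderedCondFamily q)
    {r s : ℝ → ℝ} (hr : IsProbDensity r) (hs : IsProbDensity s)
    {f f' : (Fin d → ℝ) → E} {g' : E → Fin d → ℝ}
    (hf : Measurable f) (hf' : Measurable f') (hg' : Measurable g')
    (hinv : Function.LeftInverse g' f') {k : Fin d}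
    (hmatch : Measure.map f (densityMeasure fun z =>
          r (z k) * ∏ i ∈ ({k} : Finset (Fin d))ᶜ, p i z) =
        Measure.map f' (densityMeasure fun z =>
          s (z k) * ∏ i ∈ ({k} : Finset (Fin d))ᶜ, q i z))
    {h : ℝ → ℝ} (hcont : Continuous h) (hinj : Function.Injective h)
    (hφ : ∀ z, g' (f z) k = h (z k)) :
    ((∀ x, cdfOfDensity s (h x) = cdfOfDensity r x) ∨
      (∀ x, cdfOfDensity s (h x) = 1 - cdfOfDensity r x)) ∧
    ((∀ x, 0 < r x) → r = s →
      (∀ x, h x = x) ∨ (∀ x, cdfOfDensity r (h x) = 1 - cdfOfDensity r x)) := by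
  have hmap : (densityMeasure₁ r).map h = densityMeasure₁ s := by
    rw [← hp.map_eval_interventional hr.measurable hr.nonneg k,
      ← hq.map_eval_interventional hs.measurable hs.nonneg k]
    exact map_map_eq_map_of_semiconj hf hf' hg' (measurable_pi_apply k)
      (measurable_pi_apply k) hcont.measurable hinv hφ hmatch
  have hcdf := hr.cdfOfDensity_comp_eq_or hs hcont hinj hmap
  refine ⟨hcdf, ?_⟩
  rintro hpos rfl
  exact hcdf.imp_left fun hinc x => (hr.strictMono_cdfOfDensity hpos).injective (hinc x)

/-- **Corollary (further constraint on the indeterminacy set).** In the setting of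
Theorem 1 (ii) (perfect single-node interventions with interventional discrepancy, matching
pushforwards), where `φ := f′⁻¹ ∘ f` acts componentwise as `φ(z) = (h 1 (z 1), …, h d (z d))`
for C¹ diffeomorphisms `h k` of `ℝ`: for each `k`, either `h k` is the increasing transport
`G k⁻¹ ∘ F k` (equivalently `G k ∘ h k = F k`) or the decreasing transport `Ḡ k⁻¹ ∘ F k`
(equivalently `G k ∘ h k = 1 − F k`), where `F k`, `G k` are the cdfs of `pt k`, `qt k`.
In particular, if `pt k = qt k` for all `k`, then each `h k` is either the identity or the
order-reversing map `F k⁻¹ ∘ (1 − F k)`. -/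
theorem cauca_scaling_indeterminacy_cdf {d : ℕ}
    (pa : Fin d → Finset (Fin d))
    (hpa : ∀ i : Fin d, ∀ j ∈ pa i, j < i)
    (p q : Fin d → (Fin d → ℝ) → ℝ)
    (hp : IsCondFamily pa p) (hq : IsCondFamily pa q)
    (pt qt : Fin d → ℝ → ℝ)
    (hpt : ∀ k, IsC1Density (pt k)) (hqt : ∀ k, IsC1Density (qt k))
    (hdiscp : ∀ k : Fin d, ∀ᵐ (z : Fin d → ℝ) ∂volume,
        fderiv ℝ (fun w => Real.log (p k w)) z (Pi.single k 1) ≠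
          deriv (fun t => Real.log (pt k t)) (z k))
    (hdiscq : ∀ k : Fin d, ∀ᵐ (z : Fin d → ℝ) ∂volume,
        fderiv ℝ (fun w => Real.log (q k w)) z (Pi.single k 1) ≠
          deriv (fun t => Real.log (qt k t)) (z k))
    (f f' g' : (Fin d → ℝ) → (Fin d → ℝ))
    (hf : IsC1Diffeo f) (hf' : ContDiff ℝ 1 f') (hg' : ContDiff ℝ 1 g')
    (hinv₁ : Function.LeftInverse g' f') (hinv₂ : Function.RightInverse g' f')
    (hmatch0 : Measure.map f (densityMeasure (jointDensity p)) =
        Measure.map f' (densityMeasure (jointDensity q)))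
    (hmatch : ∀ k : Fin d,
        Measure.map f (densityMeasure fun z =>
            pt k (z k) * ∏ i ∈ ({k} : Finset (Fin d))ᶜ, p i z) =
        Measure.map f' (densityMeasure fun z =>
            qt k (z k) * ∏ i ∈ ({k} : Finset (Fin d))ᶜ, q i z))
    (hs : Fin d → ℝ → ℝ) (hhs : ∀ i, IsC1Diffeo (hs i))
    (hφ : ∀ (z : Fin d → ℝ) (i : Fin d), g' (f z) i = hs i (z i)) :
    (∀ k : Fin d,
      (∀ x : ℝ, cdfOfDensity (qt k) (hs k x) = cdfOfDensity (pt k) x) ∨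
      (∀ x : ℝ, cdfOfDensity (qt k) (hs k x) = 1 - cdfOfDensity (pt k) x)) ∧
    ((∀ k, pt k = qt k) → ∀ k : Fin d,
      (∀ x : ℝ, hs k x = x) ∨
      (∀ x : ℝ, cdfOfDensity (pt k) (hs k x) = 1 - cdfOfDensity (pt k) x)) := by
  have hnode k := cauca_scaling_indeterminacy_cdf_general (hp.isOrderedCondFamily hpa)
    (hq.isOrderedCondFamily hpa) (hpt k).isProbDensity (hqt k).isProbDensity
    hf.1.continuous.measurable hf'.continuous.measurable hg'.continuous.measurable hinv₁ (hmatch k)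
    (hhs k).1.continuous (hhs k).2.choose_spec.2.1.injective (hφ · k)
  exact ⟨fun k => (hnode k).1, fun heq k => (hnode k).2 (hpt k).1 (heq k)⟩
end
end

section
/- Let d ≥ 2 and let G be a DAG on [d] (topologically ordered) such that the node d has at least one parent (pa(d) ≠ ∅). Then CauCA with d−1 perfect single-node interventions on the distinct targets 1,…,d−1 is not identifiable up to S_reparam: there exist C¹ conditional-density families (p_i), (q_i) for G, perfect intervened strictly positive C¹ densities p̃_k, q̃_k on ℝ for k ∈ [d−1] satisfying the interventional discrepancy, and C¹ diffeomorphisms f, f′ : ℝ^d → ℝ^d such that f_*P^k = f′_*Q^k for every k ∈ {0,1,…,d−1}, while f′⁻¹∘f ∉ S_reparam. -/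
open MeasureTheory

noncomputable section

/-!
Let `j` be a parent of `l`. The vector of independent noises and its image under the shear
`z_l ↦ z_l - c z_j` both factor along the graph: in the second model the `l`-th latent is noise
translated by a linear function of its parent. A shear preserves volume, so it maps one joint
density to the other. It fixes every coordinate except the `l`-th, hence the two models remain
matched under any perfect intervention on a node other than `l`, while the `l`-th coordinate of
the shear mixes two latents.
-/

open ProbabilityTheory
open scoped NNReal

lemma fderiv_comp_eval_single {ι : Type*} [Finite ι] [DecidableEq ι] {g : ℝ → ℝ} {k : ι}
    {z : ι → ℝ} (hg : DifferentiableAt ℝ g (z k)) :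
    fderiv ℝ (fun w : ι → ℝ => g (w k)) z (Pi.single k 1) = deriv g (z k) := by
  cases nonempty_fintype ι
  have hcomp : HasFDerivAt (fun w : ι → ℝ => g (w k))
      (deriv g (z k) • (ContinuousLinearMap.proj k : (ι → ℝ) →L[ℝ] ℝ)) z :=
    hg.hasDerivAt.comp_hasFDerivAt (f := fun w : ι → ℝ => w k) z (hasFDerivAt_apply k z)
  simp [hcomp.fderiv]

section Gaussian

variable {μ μ' : ℝ} {v : ℝ≥0}

lemma contDiff_gaussianPDFReal (μ : ℝ) (v : ℝ≥0) {n : WithTop ℕ∞} :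
    ContDiff ℝ n (gaussianPDFReal μ v) := by
  rw [gaussianPDFReal_def]
  fun_prop

lemma isC1Density_gaussianPDFReal (μ : ℝ) (hv : v ≠ 0) : IsC1Density (gaussianPDFReal μ v) :=
  ⟨fun x => gaussianPDFReal_pos μ v x hv, contDiff_gaussianPDFReal μ v,
    integral_gaussianPDFReal_eq_one μ hv⟩

lemma log_gaussianPDFReal (μ : ℝ) (hv : v ≠ 0) (x : ℝ) :
    Real.log (gaussianPDFReal μ v x) =
      Real.log (√(2 * Real.pi * v))⁻¹ + -(x - μ) ^ 2 / (2 * v) := by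
  have : 0 < (v : ℝ) := by positivity
  rw [gaussianPDFReal, Real.log_mul (by positivity) (Real.exp_ne_zero _), Real.log_exp]

lemma hasDerivAt_log_gaussianPDFReal (μ : ℝ) (hv : v ≠ 0) (x : ℝ) :
    HasDerivAt (fun t => Real.log (gaussianPDFReal μ v t)) (-(x - μ) / v) x := by
  simp only [log_gaussianPDFReal μ hv]
  have hsq : HasDerivAt (fun t => (t - μ) ^ 2) (2 * (x - μ)) x := by
    simpa using ((hasDerivAt_id x).sub_const μ).fun_pow 2
  refine ((hsq.fun_neg.div_const (2 * (v : ℝ))).const_add _).congr_deriv ?_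
  rw [← mul_neg, mul_div_mul_left _ _ two_ne_zero]

lemma fderiv_log_gaussianPDFReal_ne_deriv {ι : Type*} [Finite ι] [DecidableEq ι]
    (hv : v ≠ 0) (hμ : μ ≠ μ') (k : ι) (z : ι → ℝ) :
    fderiv ℝ (fun w : ι → ℝ => Real.log (gaussianPDFReal μ v (w k))) z (Pi.single k 1) ≠
      deriv (fun t => Real.log (gaussianPDFReal μ' v t)) (z k) := by
  have hderiv := hasDerivAt_log_gaussianPDFReal μ hv (z k)
  rw [fderiv_comp_eval_single (g := fun t => Real.log (gaussianPDFReal μ v t))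
      hderiv.differentiableAt, hderiv.deriv, (hasDerivAt_log_gaussianPDFReal μ' hv (z k)).deriv]
  simpa [div_left_inj' (NNReal.coe_ne_zero.mpr hv)] using hμ

end Gaussian

lemma InSReparam.exists_dependsOnlyOn_singleton {d : ℕ} {g : (Fin d → ℝ) → Fin d → ℝ}
    (hg : InSReparam g) (i : Fin d) : ∃ k, DependsOnlyOn (fun z => g z i) {k} := by
  obtain ⟨σ, hs, -, hg⟩ := hg
  refine ⟨σ i, fun z w hzw => ?_⟩
  simp only [hg, hzw (σ i) (Finset.mem_singleton_self _)]

lemma map_densityMeasure_comp {d : ℕ} {T : (Fin d → ℝ) → Fin d → ℝ}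
    (hT : MeasurePreserving T) (hemb : MeasurableEmbedding T) (ρ : (Fin d → ℝ) → ℝ) :
    Measure.map T (densityMeasure (ρ ∘ T)) = densityMeasure ρ := by
  ext s hs
  rw [Measure.map_apply hT.measurable hs, densityMeasure, densityMeasure,
    withDensity_apply _ (hT.measurable hs), withDensity_apply _ hs]
  exact hT.setLIntegral_comp_preimage_emb hemb (fun z => ENNReal.ofReal (ρ z)) s

section Shear

variable {d : ℕ} {j l : Fin d}

/-- The elementary shear of `ℝ^d` that adds `c` times coordinate `j` to coordinate `l`. It is the
change of latent variables between the two indistinguishable models. -/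
def shear (hjl : j ≠ l) (c : ℝ) : (Fin d → ℝ) ≃L[ℝ] (Fin d → ℝ) :=
  (LinearEquiv.transvection (f := LinearMap.proj (φ := fun _ => ℝ) j) (v := Pi.single l c)
    (by simp [hjl])).toContinuousLinearEquiv

lemma shear_apply (hjl : j ≠ l) (c : ℝ) (z : Fin d → ℝ) :
    shear hjl c z = z + z j • Pi.single l c := rfl

lemma shear_apply_self (hjl : j ≠ l) (c : ℝ) (z : Fin d → ℝ) :
    shear hjl c z l = z l + z j * c := by
  simp [shear_apply]

lemma shear_apply_of_ne (hjl : j ≠ l) (c : ℝ) (z : Fin d → ℝ) {i : Fin d} (hi : i ≠ l) :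
    shear hjl c z i = z i := by
  simp [shear_apply, hi]

lemma shear_symm (hjl : j ≠ l) (c : ℝ) : (shear hjl c).symm = shear hjl (-c) := by
  refine ContinuousLinearEquiv.ext (funext fun z => ?_)
  rw [ContinuousLinearEquiv.symm_apply_eq]
  simp [shear_apply, hjl, Pi.single_neg]

lemma measurePreserving_shear (hjl : j ≠ l) (c : ℝ) : MeasurePreserving (shear hjl c) := by
  refine ⟨(shear hjl c).continuous.measurable, ?_⟩
  have hdet : LinearMap.det (shear hjl c : (Fin d → ℝ) →ₗ[ℝ] Fin d → ℝ) = 1 :=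
    (LinearMap.transvection.det _ _).trans (by simp [hjl])
  simpa [hdet] using Real.map_linearMap_volume_pi_eq_smul_volume_pi (hdet.trans_ne one_ne_zero)

lemma map_shear_densityMeasure_comp (hjl : j ≠ l) (c : ℝ) (ρ : (Fin d → ℝ) → ℝ) :
    Measure.map (shear hjl c) (densityMeasure (ρ ∘ shear hjl c)) = densityMeasure ρ :=
  map_densityMeasure_comp (measurePreserving_shear hjl c)
    (shear hjl c).toHomeomorph.measurableEmbedding ρ

lemma not_inSReparam_shear (hjl : j ≠ l) {c : ℝ} (hc : c ≠ 0) : ¬ InSReparam (shear hjl c) := by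
  intro h
  obtain ⟨k, hk⟩ := h.exists_dependsOnlyOn_singleton l
  have hconst (i : Fin d) (hi : i ≠ k) : shear hjl c (Pi.single i 1) l = shear hjl c 0 l :=
    hk _ _ fun k' hk' => by simp [Finset.mem_singleton.mp hk', hi.symm]
  simp only [shear_apply_self, Pi.zero_apply, zero_mul, add_zero] at hconst
  rcases eq_or_ne l k with rfl | hlk
  · exact hc (by simpa [hjl.symm] using hconst j hjl)
  · simpa [hjl] using hconst l hlk

end Shear

section Models

variable {d : ℕ} {j l : Fin d} {r : Fin d → ℝ → ℝ}

/-- The interventional joint density `p^k`, where the perfect intervention on node `k` replaces its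
conditional density by the density `s`. -/
def interventionalDensity (p : Fin d → (Fin d → ℝ) → ℝ) (k : Fin d) (s : ℝ → ℝ)
    (z : Fin d → ℝ) : ℝ :=
  s (z k) * ∏ i ∈ {k}ᶜ, p i z

/-- The conditional-density family of independent latents with marginal densities `r i`, the first
of the two indistinguishable models. -/
def productFamily (r : Fin d → ℝ → ℝ) (i : Fin d) (z : Fin d → ℝ) : ℝ :=
  r i (z i)

/-- The conditional-density family of the linear structural model in which every node is pure
noise with density `r i`, except that node `l` is its noise minus `c` times node `j`. This is the
second of the two indistinguishable models. -/
def shearedFamily (r : Fin d → ℝ → ℝ) (hjl : j ≠ l) (c : ℝ) (i : Fin d) (z : Fin d → ℝ) : ℝ :=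
  r i (shear hjl c z i)

lemma shearedFamily_of_ne (hjl : j ≠ l) (c : ℝ) {i : Fin d} (hi : i ≠ l) :
    shearedFamily r hjl c i = productFamily r i :=
  funext fun z => congrArg (r i) (shear_apply_of_ne hjl c z hi)

lemma isCondFamily_productFamily (pa : Fin d → Finset (Fin d)) (hr : ∀ i, IsC1Density (r i)) :
    IsCondFamily pa (productFamily r) := by
  intro i
  obtain ⟨hpos, hsmooth, hint⟩ := hr i
  refine ⟨fun z => hpos _, hsmooth.comp (contDiff_apply ℝ ℝ i), fun z w hzw => ?_, fun z => ?_⟩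
  · exact congrArg (r i) (hzw i (Finset.mem_insert_self _ _))
  · simpa only [productFamily, Function.update_self] using hint

lemma isCondFamily_shearedFamily {pa : Fin d → Finset (Fin d)} (hr : ∀ i, IsC1Density (r i))
    (hj : j ∈ pa l) (hjl : j ≠ l) (c : ℝ) : IsCondFamily pa (shearedFamily r hjl c) := by
  intro i
  rcases eq_or_ne i l with rfl | hi
  · obtain ⟨hpos, hsmooth, hint⟩ := hr i
    refine ⟨fun z => hpos _, hsmooth.comp (contDiff_pi.mp (shear hjl c).contDiff i),
      fun z w hzw => ?_, fun z => ?_⟩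
    · simp only [shearedFamily, shear_apply_self, hzw i (Finset.mem_insert_self _ _),
        hzw j (Finset.mem_insert_of_mem hj)]
    · simp only [shearedFamily, shear_apply_self, Function.update_self,
        Function.update_of_ne hjl]
      rw [integral_add_right_eq_self (r i), hint]
  · rw [shearedFamily_of_ne hjl c hi]
    exact isCondFamily_productFamily pa hr i

lemma map_shear_jointDensity (hjl : j ≠ l) (c : ℝ) :
    Measure.map (shear hjl c) (densityMeasure (jointDensity (shearedFamily r hjl c))) =
      densityMeasure (jointDensity (productFamily r)) :=
  map_shear_densityMeasure_comp hjl c (jointDensity (productFamily r))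

lemma map_shear_interventionalDensity (hjl : j ≠ l) (c : ℝ) {k : Fin d} (hk : k ≠ l)
    (s : ℝ → ℝ) :
    Measure.map (shear hjl c)
        (densityMeasure (interventionalDensity (shearedFamily r hjl c) k s)) =
      densityMeasure (interventionalDensity (productFamily r) k s) := by
  have hcomp : interventionalDensity (shearedFamily r hjl c) k s =
      interventionalDensity (productFamily r) k s ∘ shear hjl c :=
    funext fun z => congrArg (s · * _) (shear_apply_of_ne hjl c z hk).symm
  rw [hcomp, map_shear_densityMeasure_comp]

end Models

theorem cauca_d_minus_one_interventions_not_identifiable_general {d : ℕ} {ι : Type*}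
    (pa : Fin d → Finset (Fin d)) {j l : Fin d} (hj : j ∈ pa l) (hjl : j ≠ l)
    (target : ι → Fin d) (htarget : ∀ k, target k ≠ l) :
    ∃ (p q : Fin d → (Fin d → ℝ) → ℝ) (pt qt : ι → ℝ → ℝ)
      (f f' g' : (Fin d → ℝ) → (Fin d → ℝ)),
      IsCondFamily pa p ∧ IsCondFamily pa q ∧
      (∀ k, IsC1Density (pt k)) ∧ (∀ k, IsC1Density (qt k)) ∧
      (∀ k, ∀ᵐ (z : Fin d → ℝ) ∂volume,
        fderiv ℝ (fun w => Real.log (p (target k) w)) z (Pi.single (target k) 1) ≠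
          deriv (fun t => Real.log (pt k t)) (z (target k))) ∧
      (∀ k, ∀ᵐ (z : Fin d → ℝ) ∂volume,
        fderiv ℝ (fun w => Real.log (q (target k) w)) z (Pi.single (target k) 1) ≠
          deriv (fun t => Real.log (qt k t)) (z (target k))) ∧
      IsC1Diffeo f ∧ ContDiff ℝ 1 f' ∧ ContDiff ℝ 1 g' ∧
      Function.LeftInverse g' f' ∧ Function.RightInverse g' f' ∧
      Measure.map f (densityMeasure (jointDensity p)) =
        Measure.map f' (densityMeasure (jointDensity q)) ∧
      (∀ k, Measure.map f (densityMeasure (interventionalDensity p (target k) (pt k))) =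
        Measure.map f' (densityMeasure (interventionalDensity q (target k) (qt k)))) ∧
      ¬ InSReparam (g' ∘ f) := by
  have hdensity (μ : ℝ) : IsC1Density (gaussianPDFReal μ 1) :=
    isC1Density_gaussianPDFReal μ one_ne_zero
  let r : Fin d → ℝ → ℝ := fun _ => gaussianPDFReal 0 1
  let T := shear hjl 1
  have hdiscrepancy (k : ι) (z : Fin d → ℝ) :
      fderiv ℝ (fun w => Real.log (productFamily r (target k) w)) z (Pi.single (target k) 1) ≠
        deriv (fun t => Real.log (gaussianPDFReal 1 1 t)) (z (target k)) :=
    fderiv_log_gaussianPDFReal_ne_deriv one_ne_zero zero_ne_one _ z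
  refine ⟨productFamily r, shearedFamily r hjl 1, fun _ => gaussianPDFReal 1 1,
    fun _ => gaussianPDFReal 1 1, id, T, T.symm,
    isCondFamily_productFamily pa fun _ => hdensity 0,
    isCondFamily_shearedFamily (fun _ => hdensity 0) hj hjl 1,
    fun _ => hdensity 1, fun _ => hdensity 1,
    fun k => .of_forall (hdiscrepancy k), fun k => .of_forall ?_,
    ⟨contDiff_id, id, contDiff_id, fun _ => rfl, fun _ => rfl⟩, T.contDiff,
    T.symm.contDiff, T.left_inv, T.right_inv, ?_, fun k => ?_, ?_⟩
  · simpa only [shearedFamily_of_ne hjl 1 (htarget k)] using hdiscrepancy k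
  · rw [Measure.map_id, map_shear_jointDensity]
  · rw [Measure.map_id, map_shear_interventionalDensity hjl 1 (htarget k)]
  · rw [shear_symm]
    exact not_inSReparam_shear hjl (neg_ne_zero.mpr one_ne_zero)

/-- **Proposition (d−1 interventions are not sufficient for CauCA).** (Here the dimension is
`d = m + 2 ≥ 2`; the intervened targets are the first `d − 1` nodes `k.castSucc` for
`k : Fin (m+1)`, and the unintervened node is the last node.) If the last node of the
(topologically ordered) DAG has at least one parent, then CauCA with `d − 1` perfect
single-node stochastic interventions on the distinct targets `1, …, d−1` is not identifiable
up to `S_reparam`: there exist two models with matching pushforwards in all regimes whose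
transition map `f′⁻¹ ∘ f` is not in `S_reparam`. -/
theorem cauca_d_minus_one_interventions_not_identifiable {m : ℕ}
    (pa : Fin (m + 2) → Finset (Fin (m + 2)))
    (hpa : ∀ i : Fin (m + 2), ∀ j ∈ pa i, j < i)
    (hlast : pa (Fin.last (m + 1)) ≠ ∅) :
    ∃ (p q : Fin (m + 2) → (Fin (m + 2) → ℝ) → ℝ)
      (pt qt : Fin (m + 1) → ℝ → ℝ)
      (f f' g' : (Fin (m + 2) → ℝ) → (Fin (m + 2) → ℝ)),
      IsCondFamily pa p ∧ IsCondFamily pa q ∧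
      (∀ k, IsC1Density (pt k)) ∧ (∀ k, IsC1Density (qt k)) ∧
      (∀ k : Fin (m + 1), ∀ᵐ (z : Fin (m + 2) → ℝ) ∂volume,
        fderiv ℝ (fun w => Real.log (p k.castSucc w)) z (Pi.single k.castSucc 1) ≠
          deriv (fun t => Real.log (pt k t)) (z k.castSucc)) ∧
      (∀ k : Fin (m + 1), ∀ᵐ (z : Fin (m + 2) → ℝ) ∂volume,
        fderiv ℝ (fun w => Real.log (q k.castSucc w)) z (Pi.single k.castSucc 1) ≠
          deriv (fun t => Real.log (qt k t)) (z k.castSucc)) ∧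
      IsC1Diffeo f ∧ ContDiff ℝ 1 f' ∧ ContDiff ℝ 1 g' ∧
      Function.LeftInverse g' f' ∧ Function.RightInverse g' f' ∧
      Measure.map f (densityMeasure (jointDensity p)) =
        Measure.map f' (densityMeasure (jointDensity q)) ∧
      (∀ k : Fin (m + 1),
        Measure.map f (densityMeasure fun z =>
            pt k (z k.castSucc) *
              ∏ i ∈ ({k.castSucc} : Finset (Fin (m + 2)))ᶜ, p i z) =
        Measure.map f' (densityMeasure fun z =>
            qt k (z k.castSucc) *
              ∏ i ∈ ({k.castSucc} : Finset (Fin (m + 2)))ᶜ, q i z)) ∧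
      ¬ InSReparam (g' ∘ f) := by
  obtain ⟨j, hj⟩ := Finset.nonempty_iff_ne_empty.mpr hlast
  exact cauca_d_minus_one_interventions_not_identifiable_general pa hj (hpa _ j hj).ne
    Fin.castSucc fun k => (Fin.castSucc_lt_last k).ne
end
end
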